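/- Degree-3 modular differential equation for the elliptic genus of a K3 surface: with all heat operators taken with index m = 1, the weak Jacobi form φ_{0,1} satisfies H^{(1)}_{4}(H^{(1)}_{2}(H^{(1)}_{0}(φ_{0,1})))(τ,z) − (101/4)·E₄(τ)·H^{(1)}_{0}(φ_{0,1})(τ,z) + 10·E₆(τ)·φ_{0,1}(τ,z) = 0 for all (τ,z) ∈ ℍ × ℂ. -/

import Mathlib

/-!
Write `∂ = (2πi)⁻¹ ∂/∂z`, `D = (2πi)⁻¹ d/dτ`, and let `Bₙ = ∑ⱼ (-1)ʲ (2n choose j) ∂ʲϑ · ∂²ⁿ⁻ʲϑ` be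
the Hirota derivative of `ϑ` of order `2n`. Then `φ₀,₁ = η⁻⁶ (E₂ B₀ - 6 B₁)`.

The theta series satisfies the heat equation `D ϑ = ½ ∂² ϑ`, so the index-one heat operator sends
`Bₙ` to `3 Bₙ₊₁` (`heatTo_hirota`). Together with `D η = E₂ η / 24` and Ramanujan's formulas for
`D E₂`, `D E₄`, `D E₆`, this shows that the modular heat operators act on functions
`η⁻⁶ ∑ cₙ Bₙ`, with `cₙ` a polynomial in `E₂, E₄, E₆`, through their coefficients
(`heatMod_comb`). Hence the left-hand side of the differential equation is an explicit combination
`F` of `B₀, …, B₄` (`mdeLHS_eq`).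

For fixed `τ`, each `Bₙ` is an entire function of `z` with the elliptic transformation law of
index one. By the recursion for Fourier coefficients such functions form a space of dimension at
most two. It contains `B₀ = ϑ²`, with a double zero at the origin, and `B₁`, which is nonzero
there; both facts use `∂ϑ(τ,0) ≠ 0`. So an element of this space vanishes as soon as its value and
its second derivative at the origin do (`QP.eq_zero`).

For `F` these two numbers are polynomials in the theta constants `∂ᵏϑ(τ,0)`, `k` odd. Since
`∂ϑ(τ,0)⁸` is a cusp form of weight 12, it is a constant multiple of `η²⁴`
(`thetaNull_pow_eq`), so `∂ϑ(τ,0)` does not vanish and has logarithmic derivative `E₂ / 8`. The heat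
equation then gives `∂ᵏϑ(τ,0) / ∂ϑ(τ,0)` for `k = 3, 5, 7, 9` as polynomials in `E₂, E₄, E₆`, and
both numbers are identically zero in these polynomials.

Ramanujan's formulas are obtained from the vanishing of cusp forms of level one and weight below 12,
applied to the differences of their two sides.
-/

open Complex Real

noncomputable section

/-- The Jacobi theta series `ϑ(τ,z) = q^{1/8} ζ^{1/2} ∑_{n∈ℤ} (−1)^n q^{n(n+1)/2} ζ^n`
with `q = e^{2πiτ}`, `ζ = e^{2πiz}`. -/
def thetaJ (τ z : ℂ) : ℂ :=
  Complex.exp (π * I * τ / 4) * Complex.exp (π * I * z) *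
    ∑' n : ℤ, (-1 : ℂ) ^ n * Complex.exp (π * I * τ * n * (n + 1)) *
      Complex.exp (2 * π * I * z * n)

/-- The Dedekind eta function `η(τ) = q^{1/24} ∏_{n≥1} (1 − q^n)`. -/
def etaD (τ : ℂ) : ℂ :=
  Complex.exp (π * I * τ / 12) * ∏' n : ℕ, (1 - Complex.exp (2 * π * I * τ * (n + 1)))

/-- The divisor power sum `σ_k(n) = ∑_{d ∣ n} d^k`. -/
def sigmaD (k n : ℕ) : ℕ := ∑ d ∈ n.divisors, d ^ k

/-- The quasi-modular Eisenstein series `E₂`. -/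
def Eis2 (τ : ℂ) : ℂ :=
  1 - 24 * ∑' n : ℕ, (sigmaD 1 (n + 1) : ℂ) * Complex.exp (2 * π * I * τ * (n + 1))

/-- The Eisenstein series `E₄`. -/
def Eis4 (τ : ℂ) : ℂ :=
  1 + 240 * ∑' n : ℕ, (sigmaD 3 (n + 1) : ℂ) * Complex.exp (2 * π * I * τ * (n + 1))

/-- The Eisenstein series `E₆`. -/
def Eis6 (τ : ℂ) : ℂ :=
  1 - 504 * ∑' n : ℕ, (sigmaD 5 (n + 1) : ℂ) * Complex.exp (2 * π * I * τ * (n + 1))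

/-- The heat operator `H^{(m)}φ = (12/(2πi)) ∂φ/∂τ + (3/(4π²m)) ∂²φ/∂z²` of index `m`. -/
def heatOp (m : ℚ) (φ : ℂ → ℂ → ℂ) (τ z : ℂ) : ℂ :=
  12 / (2 * π * I) * deriv (fun t => φ t z) τ
    + 3 / (4 * π ^ 2 * (m : ℂ)) * deriv (deriv (φ τ)) z

/-- The modular heat operator `H^{(m)}_k φ = H^{(m)}φ − ((2k−1)/2)·E₂·φ`. -/
def heatMod (m k : ℚ) (φ : ℂ → ℂ → ℂ) (τ z : ℂ) : ℂ :=
  heatOp m φ τ z - (2 * (k : ℂ) - 1) / 2 * Eis2 τ * φ τ z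

/-- The weak Jacobi form `φ_{−2,1} = ϑ²/η⁶` of weight −2 and index 1. -/
def phim21 (τ z : ℂ) : ℂ := thetaJ τ z ^ 2 / etaD τ ^ 6

/-- The weak Jacobi form `φ_{0,1}` of weight 0 and index 1:
`φ_{0,1} = (3/π²)·(ϑ·∂²ϑ/∂z² − (∂ϑ/∂z)²)/η⁶ + E₂·ϑ²/η⁶`. -/
def phi01 (τ z : ℂ) : ℂ :=
  3 / (π : ℂ) ^ 2 *
      (thetaJ τ z * deriv (deriv (thetaJ τ)) z - (deriv (thetaJ τ) z) ^ 2) / etaD τ ^ 6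
    + Eis2 τ * thetaJ τ z ^ 2 / etaD τ ^ 6

/-! ### Cusp forms of level one and the Eisenstein series -/

section Modular

open UpperHalfPlane hiding I
open Filter Topology ModularGroup EisensteinSeries Derivative
open scoped Manifold MatrixGroups ModularForm

/-- A level one cusp form assembled from invariance under the whole modular group, holomorphy,
and vanishing at `i∞`. -/
def cuspOf {k : ℤ} {f : ℍ → ℂ} (hf : MDiff f) (hinv : ∀ γ : SL(2, ℤ), f ∣[k] γ = f)
    (h0 : IsZeroAtImInfty f) : CuspForm (Matrix.SpecialLinearGroup.mapGL (n := Fin 2) (R := ℤ) ℝ).range k where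
  toFun := f
  slash_action_eq' A hA := by
    obtain ⟨A, rfl⟩ := hA
    exact hinv A
  holo' := hf
  zero_at_cusps' hc := by
    rw [Subgroup.IsArithmetic.isCusp_iff_isCusp_SL2Z] at hc
    rw [OnePoint.isZeroAt_iff_forall_SL2Z hc]
    intro γ _
    rw [hinv]
    exact h0

lemma eq_zero_of_cusp {k : ℤ} (hk : k < 12) {f : ℍ → ℂ} (hf : MDiff f)
    (hinv : ∀ γ : SL(2, ℤ), f ∣[k] γ = f) (h0 : IsZeroAtImInfty f) (z : ℍ) : f z = 0 := by
  have h := rank_zero_iff_forall_zero.mp (CuspForm.rank_eq_zero_of_weight_lt_twelve hk)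
    (cuspOf hf hinv h0)
  exact congrArg (fun g => g z) h

/-- By Cauchy's estimate on unit discs, a holomorphic function with a limit at `i∞` has
derivative tending to zero there. -/
lemma tendsto_normalizedDeriv {F : ℍ → ℂ} (hF : MDiff F) {c : ℂ}
    (h : Tendsto F atImInfty (𝓝 c)) : Tendsto (normalizedDerivOfComplex F) atImInfty (𝓝 0) := by
  have h1 : Tendsto (fun z : ℍ => deriv (F ∘ ofComplex) z) atImInfty (𝓝 0) := by
    rw [Metric.tendsto_nhds]
    intro ε hε
    have h2 := (Metric.tendsto_nhds.mp h) (ε / 2) (by positivity)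
    rw [Filter.Eventually, atImInfty_mem] at h2
    obtain ⟨A, hA⟩ := h2
    rw [Filter.Eventually, atImInfty_mem]
    refine ⟨max A 0 + 2, fun z hz => ?_⟩
    have hpos : ∀ w ∈ Metric.closedBall (z : ℂ) 1, max A 0 < w.im := by
      intro w hw
      have h3 : |(w - z).im| ≤ 1 := (Complex.abs_im_le_norm _).trans (by
        simpa [dist_eq_norm] using hw)
      have := (abs_le.mp h3).1
      have hzz : (z : ℂ).im = z.im := rfl
      rw [Complex.sub_im, hzz] at this
      linarith
    rw [UpperHalfPlane.mdifferentiable_iff] at hF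
    have hd : DifferentiableOn ℂ (fun w => (F ∘ ofComplex) w - c) (Metric.closedBall (z : ℂ) 1) :=
      (hF.mono (fun w hw => lt_of_le_of_lt (le_max_right A 0) (hpos w hw))).sub_const c
    have h4 := Complex.norm_deriv_le_of_forall_mem_sphere_norm_le (c := (z : ℂ)) (R := 1)
      (C := ε / 2) (f := fun w => (F ∘ ofComplex) w - c) one_pos
      (hd.diffContOnCl_ball subset_rfl) (by
        intro w hw
        have hw' := hpos w (Metric.sphere_subset_closedBall hw)
        have hw0 : 0 < w.im := lt_of_le_of_lt (le_max_right A 0) hw'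
        have := hA ⟨w, hw0⟩ (le_trans (le_max_left A 0) hw'.le)
        rw [Set.mem_ofPred_eq, dist_eq_norm] at this
        rw [Function.comp_apply, ofComplex_apply_of_im_pos hw0]
        exact this.le)
    rw [deriv_sub_const] at h4
    rw [Set.mem_ofPred_eq, dist_zero_right]
    linarith
  have := h1.const_mul ((2 * π * I : ℂ)⁻¹)
  rw [mul_zero] at this
  exact this

lemma exp_mul_succ (τ : ℂ) (n : ℕ) :
    Complex.exp (2 * π * I * τ * (n + 1)) = Complex.exp (2 * π * I * τ) ^ (n + 1) := by
  rw [← Complex.exp_nat_mul]; congr 1; push_cast; ring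

lemma sigmaD_eq (k n : ℕ) : sigmaD k n = ArithmeticFunction.sigma k n := by
  rw [sigmaD, ArithmeticFunction.sigma_apply]

lemma tsum_sigmaD (k : ℕ) (z : ℍ) :
    ∑' n : ℕ, (sigmaD k (n + 1) : ℂ) * Complex.exp (2 * π * I * z * (n + 1)) =
      ∑' n : ℕ+, (ArithmeticFunction.sigma k n : ℂ) * Complex.exp (2 * π * I * z) ^ (n : ℕ) := by
  rw [tsum_pnat_eq_tsum_succ (f := fun n : ℕ => (ArithmeticFunction.sigma k n : ℂ) *
    Complex.exp (2 * π * I * z) ^ n)]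
  simp only [sigmaD_eq, exp_mul_succ]

lemma Eis2_coe (z : ℍ) : Eis2 z = E2 z := by
  rw [Eis2, tsum_sigmaD, E2_eq_tsum_cexp]

lemma Eis4_coe (z : ℍ) : Eis4 z = ModularForm.E₄ z := by
  rw [Eis4, tsum_sigmaD]
  have hb : bernoulli 4 = -1 / 30 := by
    rw [bernoulli_eq_bernoulli'_of_ne_one (by norm_num), bernoulli'_four]
  have := q_expansion_bernoulli (k := 4) (by norm_num) (by decide) z
  rw [hb] at this
  refine Eq.trans ?_ this.symm
  push_cast
  norm_num

lemma Eis6_coe (z : ℍ) : Eis6 z = ModularForm.E₆ z := by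
  rw [Eis6, tsum_sigmaD]
  have hb : bernoulli 6 = 1 / 42 := by
    rw [bernoulli_eq_bernoulli'_of_ne_one (by norm_num), bernoulli'_def]
    have h5 : bernoulli' 5 = 0 := bernoulli'_eq_zero_of_odd (by decide) (by norm_num)
    norm_num [Finset.sum_range_succ, h5, Nat.choose]
  have := q_expansion_bernoulli (k := 6) (by norm_num) (by decide) z
  rw [hb] at this
  refine Eq.trans ?_ this.symm
  push_cast
  norm_num

lemma norm_exp_tau (τ : ℂ) (n : ℕ) :
    ‖Complex.exp (2 * π * I * τ * (n + 1))‖ = Real.exp (-(2 * π * (n + 1)) * τ.im) := by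
  rw [Complex.norm_exp]
  congr 1
  have : (2 * π * I * τ * (n + 1) : ℂ) = ((2 * π * (n + 1) : ℝ) : ℂ) * (I * τ) := by
    push_cast; ring
  rw [this, Complex.re_ofReal_mul]
  simp
  

lemma tendsto_sigma_series (k : ℕ) :
    Tendsto (fun z : ℍ => ∑' n : ℕ, (sigmaD k (n + 1) : ℂ) * Complex.exp (2 * π * I * z * (n + 1)))
      atImInfty (𝓝 0) := by
  have him : Tendsto (fun z : ℍ => z.im) atImInfty atTop := tendsto_comap
  have hs : Summable fun n : ℕ => (sigmaD k (n + 1) : ℝ) * Real.exp (-(2 * π * (n + 1)) * 1) := by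
    have h1 := (summable_sigma_mul_cexp_pow (k := k + 1) (by omega) UpperHalfPlane.I).norm
    have h2 := (summable_nat_add_iff 1).mpr h1
    refine h2.congr fun n => ?_
    rw [norm_mul, ← exp_mul_succ, norm_exp_tau, sigmaD_eq]
    simp
  have := tendsto_tsum_of_dominated_convergence (𝓕 := atImInfty)
    (f := fun (z : ℍ) (n : ℕ) => (sigmaD k (n + 1) : ℂ) * Complex.exp (2 * π * I * z * (n + 1)))
    (g := fun _ => 0) hs ?_ ?_
  · simpa using this
  · intro n
    rw [tendsto_zero_iff_norm_tendsto_zero]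
    simp only [norm_mul, norm_exp_tau]
    rw [← mul_zero ‖(sigmaD k (n + 1) : ℂ)‖]
    refine Tendsto.const_mul _ (Real.tendsto_exp_atBot.comp ?_)
    exact Tendsto.const_mul_atTop_of_neg (by
      have : (0 : ℝ) < 2 * π * (n + 1) := by positivity
      linarith) him
  · filter_upwards [him.eventually_ge_atTop 1] with z hz n
    rw [norm_mul, norm_exp_tau, Complex.norm_natCast]
    have : (0 : ℝ) < 2 * π * (n + 1) := by positivity
    have hzz : (z : ℂ).im = z.im := rfl
    refine mul_le_mul_of_nonneg_left (Real.exp_le_exp.mpr ?_) (Nat.cast_nonneg _)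
    rw [hzz]
    nlinarith

lemma tendsto_E2 : Tendsto E2 atImInfty (𝓝 1) := by
  have := ((tendsto_sigma_series 1).const_mul 24).const_sub 1
  simpa [← Eis2_coe, Eis2] using this.congr fun z => Eis2_coe z

lemma tendsto_E4 : Tendsto ModularForm.E₄ atImInfty (𝓝 1) := by
  have := ((tendsto_sigma_series 3).const_mul 240).const_add 1
  simpa using this.congr fun z => Eis4_coe z

lemma tendsto_E6 : Tendsto ModularForm.E₆ atImInfty (𝓝 1) := by
  have := ((tendsto_sigma_series 5).const_mul 504).const_sub 1
  simpa using this.congr fun z => Eis6_coe z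

lemma modularForm_slash {k : ℤ} (f : ModularForm (Matrix.SpecialLinearGroup.mapGL (n := Fin 2) (R := ℤ) ℝ).range k)
    (γ : SL(2, ℤ)) : ⇑f ∣[k] γ = f :=
  f.slash_action_eq' _ ⟨γ, rfl⟩

end Modular

/-! ### Ramanujan's differential equations -/

section Ramanujan

open UpperHalfPlane hiding I
open Filter Topology ModularGroup EisensteinSeries Derivative
open scoped Manifold MatrixGroups ModularForm

lemma slash_add_pow {k : ℤ} (f g : ℍ → ℂ) (γ : SL(2, ℤ)) (hf : f ∣[k] γ = f) (hg : g ∣[k] γ = g)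
    (a b : ℂ) : (fun z => a * f z + b * g z) ∣[k] γ = fun z => a * f z + b * g z := by
  have h : (fun z => a * f z + b * g z) = a • f + b • g := rfl
  rw [h, SlashAction.add_slash, ModularForm.SL_smul_slash, ModularForm.SL_smul_slash, hf, hg]

lemma ramanujan_E4_form (z : ℍ) :
    normalizedDerivOfComplex ModularForm.E₄ z =
      (E2 z * ModularForm.E₄ z - ModularForm.E₆ z) / 3 := by
  have hm : MDiff (⇑ModularForm.E₄) := ModularForm.E₄.holo'
  have hm6 : MDiff (⇑ModularForm.E₆) := ModularForm.E₆.holo'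
  have h := eq_zero_of_cusp (k := 6) (by norm_num)
    (f := fun z => 1 * serreDerivative (4 : ℤ) ModularForm.E₄ z + (1 / 3) * ModularForm.E₆ z)
    ?_ ?_ ?_ z
  · simp only [serreDerivative_apply] at h
    push_cast at h
    linear_combination h
  · have h1 := serreDerivative_mdifferentiable (4 : ℤ) hm
    exact (mdifferentiable_const.mul h1).add (mdifferentiable_const.mul hm6)
  · intro γ
    exact slash_add_pow _ _ γ (serreDerivative_slash_invariant hm (modularForm_slash _ γ))
      (modularForm_slash _ γ) _ _
  · have h1 := ((tendsto_normalizedDeriv hm tendsto_E4).sub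
      ((tendsto_E2.const_mul ((4 : ℤ) * 12⁻¹ : ℂ)).mul tendsto_E4)).const_mul 1
    have h2 := h1.add (tendsto_E6.const_mul (1 / 3 : ℂ))
    simp only [IsZeroAtImInfty, ZeroAtFilter, serreDerivative_apply]
    convert h2 using 2
    push_cast
    norm_num

lemma ramanujan_E6_form (z : ℍ) :
    normalizedDerivOfComplex ModularForm.E₆ z =
      (E2 z * ModularForm.E₆ z - ModularForm.E₄ z ^ 2) / 2 := by
  have hm : MDiff (⇑ModularForm.E₆) := ModularForm.E₆.holo'
  have hm4 : MDiff (⇑ModularForm.E₄) := ModularForm.E₄.holo'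
  have h := eq_zero_of_cusp (k := 8) (by norm_num)
    (f := fun z => 1 * serreDerivative (6 : ℤ) ModularForm.E₆ z
      + (1 / 2) * (⇑ModularForm.E₄ * ⇑ModularForm.E₄) z)
    ?_ ?_ ?_ z
  · simp only [serreDerivative_apply, Pi.mul_apply] at h
    push_cast at h
    linear_combination h
  · have h1 := serreDerivative_mdifferentiable (6 : ℤ) hm
    exact (mdifferentiable_const.mul h1).add (mdifferentiable_const.mul (hm4.mul hm4))
  · intro γ
    refine slash_add_pow _ _ γ (serreDerivative_slash_invariant hm (modularForm_slash _ γ)) ?_ _ _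
    have := ModularForm.mul_slash_SL2 4 4 γ ModularForm.E₄ ModularForm.E₄
    rw [modularForm_slash] at this
    exact this
  · have h1 := ((tendsto_normalizedDeriv hm tendsto_E6).sub
      ((tendsto_E2.const_mul ((6 : ℤ) * 12⁻¹ : ℂ)).mul tendsto_E6)).const_mul 1
    have h2 := h1.add ((tendsto_E4.mul tendsto_E4).const_mul (1 / 2 : ℂ))
    simp only [IsZeroAtImInfty, ZeroAtFilter, serreDerivative_apply, Pi.mul_apply]
    convert h2 using 2
    push_cast
    norm_num

lemma E2_slash_S (z : ℍ) : (E2 ∣[(2 : ℤ)] S) z = E2 z + 6 / (π * I) / z := by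
  rw [E2_slash_action]
  simp only [Pi.sub_apply, Pi.smul_apply, D2_S, riemannZeta_two, smul_eq_mul]
  have hz := z.ne_zero
  have hpi : (π : ℂ) ≠ 0 := by exact_mod_cast Real.pi_ne_zero
  field_simp
  linear_combination (-6 : ℂ) * I_sq

lemma E2_slash_T : E2 ∣[(2 : ℤ)] T = E2 := by
  rw [E2_slash_action, D2_T]; simp

/-- The terms by which `D E₂` and `E₂² / 12` fail to be modular agree, so `D E₂ - E₂² / 12`
is modular of weight 4. -/
lemma slash_ramanujan_E2 (γ : SL(2, ℤ)) :
    (fun z => 1 * normalizedDerivOfComplex E2 z + (-1 / 12) * (E2 * E2) z) ∣[(4 : ℤ)] γ =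
      fun z => 1 * normalizedDerivOfComplex E2 z + (-1 / 12) * (E2 * E2) z := by
  refine SlashInvariantForm.slash_action_generators_SL2Z ?_ ?_ γ
  · have h : (fun z => 1 * normalizedDerivOfComplex E2 z + (-1 / 12) * (E2 * E2) z) =
      (1 : ℂ) • normalizedDerivOfComplex E2 + (-1 / 12 : ℂ) • (E2 * E2) := rfl
    have hmul : (E2 * E2) ∣[(4 : ℤ)] S = (E2 ∣[(2 : ℤ)] S) * (E2 ∣[(2 : ℤ)] S) :=
      ModularForm.mul_slash_SL2 2 2 S E2 E2
    have hD := normalizedDerivOfComplex_SL_slash (k := 2) E2_mdifferentiable (γ := S)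
    rw [h, SlashAction.add_slash, ModularForm.SL_smul_slash, ModularForm.SL_smul_slash, hmul]
    ext z
    have hDz := congrFun hD z
    have hz := z.ne_zero
    have hpi : (π : ℂ) ≠ 0 := by exact_mod_cast Real.pi_ne_zero
    have hL : normalizedDerivOfComplex (E2 ∣[(2 : ℤ)] S) z =
        normalizedDerivOfComplex E2 z + 3 / (π ^ 2 * (z : ℂ) ^ 2) := by
      have h1 : HasDerivAt (E2 ∘ ofComplex) (deriv (E2 ∘ ofComplex) z) (z : ℂ) :=
        (mdifferentiableAt_iff.mp (E2_mdifferentiable z)).hasDerivAt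
      have h2 : HasDerivAt (fun w : ℂ => 6 / (π * I) / w) (6 / (π * I) * (-1 / (z : ℂ) ^ 2)) (z : ℂ) := by
        simpa [div_eq_mul_inv] using (hasDerivAt_inv hz).const_mul (6 / (π * I) : ℂ)
      have h3 : ((E2 ∣[(2 : ℤ)] S) ∘ ofComplex) =ᶠ[𝓝 (z : ℂ)]
          fun w => (E2 ∘ ofComplex) w + 6 / (π * I) / w := by
        filter_upwards [isOpen_upperHalfPlaneSet.mem_nhds z.im_pos] with w hw
        rw [Function.comp_apply, E2_slash_S, Function.comp_apply, ofComplex_apply_of_im_pos hw]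
      rw [normalizedDerivOfComplex, ((h1.add h2).congr_of_eventuallyEq h3).deriv,
        normalizedDerivOfComplex]
      field_simp
      linear_combination (-6 : ℂ) * I_sq
    rw [hL] at hDz
    simp only [Pi.sub_apply, E2_slash_S] at hDz
    have hden : (denom S z : ℂ) = z := by rw [denom_S]
    rw [hden] at hDz
    simp only [Pi.add_apply, Pi.smul_apply, Pi.mul_apply, smul_eq_mul, E2_slash_S]
    have hS : ((S 1 0 : ℤ) : ℂ) = 1 := by simp [S]
    rw [hS] at hDz
    have h4 : (normalizedDerivOfComplex E2 ∣[(4 : ℤ)] S) z =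
        normalizedDerivOfComplex E2 z + 3 / (π ^ 2 * (z : ℂ) ^ 2) +
        ((2 : ℤ) : ℂ) * (2 * π * I)⁻¹ * (1 / z) * (E2 z + 6 / (π * I) / z) := by
      rw [hDz]; simp
    rw [h4]
    push_cast
    field_simp
    ring_nf
    simp only [I_sq]
    ring
  · have hmul : (E2 * E2) ∣[(4 : ℤ)] T = E2 * E2 := by
      have := ModularForm.mul_slash_SL2 2 2 T E2 E2
      rw [E2_slash_T] at this
      exact this
    have hD := normalizedDerivOfComplex_SL_slash (k := 2) E2_mdifferentiable (γ := T)
    rw [E2_slash_T] at hD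
    refine slash_add_pow _ _ T ?_ hmul _ _
    ext z
    have hDz := congrFun hD z
    have hT : ((T 1 0 : ℤ) : ℂ) = 0 := by simp [T]
    simp only [Pi.sub_apply, hT] at hDz
    rw [hDz]
    simp

lemma ramanujan_E2_form (z : ℍ) :
    normalizedDerivOfComplex E2 z = (E2 z ^ 2 - ModularForm.E₄ z) / 12 := by
  have hm := E2_mdifferentiable
  have hm4 : MDiff (⇑ModularForm.E₄) := ModularForm.E₄.holo'
  have h := eq_zero_of_cusp (k := 4) (by norm_num)
    (f := fun z => 1 * (fun z => 1 * normalizedDerivOfComplex E2 z + (-1 / 12) * (E2 * E2) z) z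
      + (1 / 12) * ModularForm.E₄ z)
    ?_ ?_ ?_ z
  · simp only [Pi.mul_apply] at h
    linear_combination h
  · have h1 := normalizedDerivOfComplex_mdifferentiable hm
    exact (mdifferentiable_const.mul ((mdifferentiable_const.mul h1).add
      (mdifferentiable_const.mul (hm.mul hm)))).add (mdifferentiable_const.mul hm4)
  · intro γ
    exact slash_add_pow _ _ γ (slash_ramanujan_E2 γ) (modularForm_slash _ γ) _ _
  · have h1 := ((((tendsto_normalizedDeriv hm tendsto_E2).const_mul 1).add
      ((tendsto_E2.mul tendsto_E2).const_mul (-1 / 12 : ℂ))).const_mul 1).add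
      (tendsto_E4.const_mul (1 / 12 : ℂ))
    simp only [IsZeroAtImInfty, ZeroAtFilter, Pi.mul_apply]
    convert h1 using 2
    norm_num

/-- `c'` is the normalised derivative `D c = (2πi)⁻¹ dc/dτ` on the upper half-plane. -/
def HasD (c c' : ℂ → ℂ) : Prop :=
  ∀ τ : ℂ, 0 < τ.im → HasDerivAt c (2 * π * I * c' τ) τ

lemma hasD_of_form {F : ℍ → ℂ} (hF : MDiff F) {G G' : ℂ → ℂ} (h : ∀ z : ℍ, G z = F z)
    (h' : ∀ z : ℍ, normalizedDerivOfComplex F z = G' z) : HasD G G' := by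
  intro τ hτ
  have h1 : HasDerivAt (F ∘ ofComplex) (deriv (F ∘ ofComplex) τ) τ :=
    (mdifferentiableAt_iff.mp (hF ⟨τ, hτ⟩)).hasDerivAt
  have h2 := h' ⟨τ, hτ⟩
  have h3 : deriv (F ∘ ofComplex) τ = 2 * π * I * G' τ := by
    rw [normalizedDerivOfComplex] at h2
    have : ((⟨τ, hτ⟩ : ℍ) : ℂ) = τ := rfl
    rw [this] at h2
    rw [← h2]
    have hpi : (π : ℂ) ≠ 0 := by exact_mod_cast Real.pi_ne_zero
    field_simp
  rw [h3] at h1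
  refine h1.congr_of_eventuallyEq ?_
  filter_upwards [isOpen_upperHalfPlaneSet.mem_nhds hτ] with w hw
  rw [Function.comp_apply, ofComplex_apply_of_im_pos hw, ← h]

lemma hasD_Eis2 : HasD Eis2 (fun τ => (Eis2 τ ^ 2 - Eis4 τ) / 12) :=
  hasD_of_form E2_mdifferentiable Eis2_coe fun z => by
    rw [ramanujan_E2_form, Eis2_coe, Eis4_coe]

lemma hasD_Eis4 : HasD Eis4 (fun τ => (Eis2 τ * Eis4 τ - Eis6 τ) / 3) :=
  hasD_of_form ModularForm.E₄.holo' Eis4_coe fun z => by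
    rw [Eis2_coe, Eis4_coe, Eis6_coe]; exact ramanujan_E4_form z

lemma hasD_Eis6 : HasD Eis6 (fun τ => (Eis2 τ * Eis6 τ - Eis4 τ ^ 2) / 2) :=
  hasD_of_form ModularForm.E₆.holo' Eis6_coe fun z => by
    rw [Eis2_coe, Eis4_coe, Eis6_coe]; exact ramanujan_E6_form z

lemma etaD_eq (τ : ℂ) : etaD τ = ModularForm.eta τ := by
  rw [etaD, ModularForm.eta]
  congr 1
  · rw [Function.Periodic.qParam]; congr 1; push_cast; ring
  · refine tprod_congr fun n => ?_
    rw [ModularForm.eta_q_eq_cexp]; congr 2; ring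

lemma etaD_ne_zero {τ : ℂ} (hτ : 0 < τ.im) : etaD τ ≠ 0 := by
  rw [etaD_eq]; exact ModularForm.eta_ne_zero hτ

lemma hasD_etaD : HasD etaD (fun τ => Eis2 τ / 24 * etaD τ) := by
  intro τ hτ
  have h1 := (ModularForm.differentiableAt_eta_of_mem_upperHalfPlaneSet hτ).hasDerivAt
  have h2 := ModularForm.logDeriv_eta_eq_E2 ⟨τ, hτ⟩
  rw [logDeriv_apply, div_eq_iff (ModularForm.eta_ne_zero hτ), ← Eis2_coe] at h2
  have h3 : deriv ModularForm.eta τ = 2 * π * I * (Eis2 τ / 24 * etaD τ) := by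
    rw [etaD_eq]
    refine h2.trans ?_
    change _ * Eis2 τ * ModularForm.eta τ = _
    ring
  rw [h3] at h1
  rwa [show etaD = ModularForm.eta from funext etaD_eq] at *

end Ramanujan

/-! ### The theta series and its derivatives -/

section Theta

open Filter Topology

/-- The `n`-th term of the series for `∂ᵏϑ`, where `∂ = (2πi)⁻¹ ∂/∂z`. -/
def thetaTerm (k : ℕ) (n : ℤ) (τ z : ℂ) : ℂ :=
  (-1 : ℂ) ^ n * (n + 1 / 2) ^ k *
    Complex.exp (π * I * (n + 1 / 2) ^ 2 * τ + 2 * π * I * (n + 1 / 2) * z)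

/-- The normalised derivative `∂ᵏϑ`, with `∂ = (2πi)⁻¹ ∂/∂z`. -/
def thetaT (k : ℕ) (τ z : ℂ) : ℂ := ∑' n : ℤ, thetaTerm k n τ z

/-- A bound for the theta terms on the region `S`-close to the real axis in `z` and of imaginary
part at least `T` in `τ`. -/
def thetaBound (k : ℕ) (S T : ℝ) (n : ℤ) : ℝ :=
  |(n : ℝ) + 1 / 2| ^ k *
    Real.exp (-π * (T * ((n : ℝ) + 1 / 2) ^ 2 - 2 * S * |(n : ℝ) + 1 / 2|))

lemma norm_half (n : ℤ) : ‖((n : ℂ) + 1 / 2)‖ = |(n : ℝ) + 1 / 2| := by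
  rw [← Real.norm_eq_abs, ← Complex.norm_real]; push_cast; rfl

lemma norm_negOne_zpow (n : ℤ) : ‖(-1 : ℂ) ^ n‖ = 1 := by
  rw [norm_zpow, norm_neg, norm_one, one_zpow]

lemma norm_thetaTerm (k : ℕ) (n : ℤ) (τ z : ℂ) :
    ‖thetaTerm k n τ z‖ = |(n : ℝ) + 1 / 2| ^ k *
      Real.exp (-π * (((n : ℝ) + 1 / 2) ^ 2 * τ.im + 2 * ((n : ℝ) + 1 / 2) * z.im)) := by
  rw [thetaTerm, norm_mul, norm_mul, norm_negOne_zpow, norm_pow, norm_half, one_mul,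
    Complex.norm_exp]
  congr 2
  have : (π * I * (n + 1 / 2) ^ 2 * τ + 2 * π * I * (n + 1 / 2) * z : ℂ) =
    ((π * ((n : ℝ) + 1 / 2) ^ 2 : ℝ) : ℂ) * (I * τ)
      + ((2 * π * ((n : ℝ) + 1 / 2) : ℝ) : ℂ) * (I * z) := by
    push_cast; ring
  rw [this, Complex.add_re, Complex.re_ofReal_mul, Complex.re_ofReal_mul]
  simp only [Complex.mul_re, I_re, I_im]
  ring

lemma norm_thetaTerm_le {S T : ℝ} {τ z : ℂ} (hz : |z.im| ≤ S) (hτ : T ≤ τ.im) (k : ℕ) (n : ℤ) :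
    ‖thetaTerm k n τ z‖ ≤ thetaBound k S T n := by
  rw [norm_thetaTerm, thetaBound]
  refine mul_le_mul_of_nonneg_left (Real.exp_le_exp.mpr ?_) (by positivity)
  set a : ℝ := (n : ℝ) + 1 / 2
  have h1 : -(a * z.im) ≤ S * |a| := by
    have := neg_le_abs (a * z.im)
    rw [abs_mul] at this
    nlinarith [mul_le_mul_of_nonneg_left hz (abs_nonneg a)]
  have h2 : T * a ^ 2 ≤ a ^ 2 * τ.im := by nlinarith [sq_nonneg a]
  nlinarith [Real.pi_pos]

lemma summable_thetaBound (k : ℕ) (S : ℝ) {T : ℝ} (hT : 0 < T) (hS : 0 ≤ S) :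
    Summable (thetaBound k S T) := by
  have h1 := summable_pow_mul_jacobiTheta₂_term_bound (S + T / 2) hT k
  have h2 := summable_pow_mul_jacobiTheta₂_term_bound (S + T / 2) hT 0
  refine Summable.of_nonneg_of_le (fun n => by unfold thetaBound; positivity) (fun n => ?_)
    ((h1.add h2).mul_left (2 ^ k * Real.exp (π * (2 * S))))
  unfold thetaBound
  rw [pow_zero, ← add_mul]
  have ha : |(n : ℝ) + 1 / 2| ≤ |(n : ℝ)| + 1 := by
    refine (abs_add_le _ _).trans ?_
    rw [abs_of_pos (by norm_num : (0 : ℝ) < 1 / 2)]; linarith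
  have hb : |(n : ℝ) + 1 / 2| ^ k ≤ 2 ^ k * (|(n : ℝ)| ^ k + 1) := by
    refine (pow_le_pow_left₀ (abs_nonneg _) ha k).trans ?_
    rcases le_total (|(n : ℝ)|) 1 with h | h
    · calc (|(n : ℝ)| + 1) ^ k ≤ 2 ^ k := pow_le_pow_left₀ (by positivity) (by linarith) k
        _ ≤ 2 ^ k * (|(n : ℝ)| ^ k + 1) :=
          le_mul_of_one_le_right (by positivity) (by
            have : 0 ≤ |(n : ℝ)| ^ k := by positivity
            linarith)
    · calc (|(n : ℝ)| + 1) ^ k ≤ (2 * |(n : ℝ)|) ^ k :=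
          pow_le_pow_left₀ (by positivity) (by linarith) k
        _ = 2 ^ k * |(n : ℝ)| ^ k := mul_pow _ _ _
        _ ≤ _ := by
          refine mul_le_mul_of_nonneg_left ?_ (by positivity)
          linarith
  have hc : Real.exp (-π * (T * ((n : ℝ) + 1 / 2) ^ 2 - 2 * S * |(n : ℝ) + 1 / 2|)) ≤
      Real.exp (π * (2 * S)) *
        Real.exp (-π * (T * (n : ℝ) ^ 2 - 2 * (S + T / 2) * |(n : ℝ)|)) := by
    rw [← Real.exp_add]
    refine Real.exp_le_exp.mpr ?_
    have h3 : -(n : ℝ) ≤ |(n : ℝ)| := neg_le_abs _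
    have h4 : -(T * (n : ℝ)) ≤ T * |(n : ℝ)| := by nlinarith
    have h5 : S * |(n : ℝ) + 1 / 2| ≤ S * (|(n : ℝ)| + 1) := mul_le_mul_of_nonneg_left ha hS
    have h6 : -(T * ((n : ℝ) + 1 / 2) ^ 2 - 2 * S * |(n : ℝ) + 1 / 2|) ≤
      2 * S - (T * (n : ℝ) ^ 2 - 2 * (S + T / 2) * |(n : ℝ)|) := by nlinarith
    nlinarith [mul_le_mul_of_nonneg_left h6 Real.pi_pos.le]
  calc _ ≤ (2 ^ k * (|(n : ℝ)| ^ k + 1)) * (Real.exp (π * (2 * S)) *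
        Real.exp (-π * (T * (n : ℝ) ^ 2 - 2 * (S + T / 2) * |(n : ℝ)|))) :=
        mul_le_mul hb hc (Real.exp_pos _).le (by positivity)
    _ = _ := by push_cast; ring

lemma summable_thetaTerm (k : ℕ) {τ : ℂ} (hτ : 0 < τ.im) (z : ℂ) :
    Summable fun n => thetaTerm k n τ z :=
  (summable_thetaBound k |z.im| hτ (abs_nonneg _)).of_norm_bounded
    (norm_thetaTerm_le le_rfl le_rfl k)

lemma hasDerivAt_thetaT_z (k : ℕ) {τ : ℂ} (hτ : 0 < τ.im) (z : ℂ) :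
    HasDerivAt (thetaT k τ) (2 * π * I * thetaT (k + 1) τ z) z := by
  set S := |z.im| + 1
  have hS : 0 ≤ S := by positivity
  have hconv : Convex ℝ {w : ℂ | |w.im| < S} := by
    have : {w : ℂ | |w.im| < S} = Complex.imLm ⁻¹' (Set.Ioo (-S) S) := by
      ext w; simp [abs_lt]
    rw [this]
    exact (convex_Ioo _ _).linear_preimage _
  have hmem : z ∈ {w : ℂ | |w.im| < S} := by simp [S]
  rw [thetaT, ← tsum_mul_left]
  refine hasDerivAt_tsum_of_isPreconnected (t := {w : ℂ | |w.im| < S}) (y₀ := z)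
    (g := fun n w => thetaTerm k n τ w)
    (g' := fun n w => 2 * π * I * thetaTerm (k + 1) n τ w)
    ((summable_thetaBound (k + 1) S hτ hS).mul_left ‖(2 * π * I : ℂ)‖)
    (isOpen_lt (by fun_prop) continuous_const)
    hconv.isPreconnected ?_ ?_ hmem (summable_thetaTerm k hτ z) hmem
  · intro n w _
    unfold thetaTerm
    have h1 : HasDerivAt (fun w : ℂ => π * I * (n + 1 / 2) ^ 2 * τ + 2 * π * I * (n + 1 / 2) * w)
      (2 * π * I * (n + 1 / 2)) w := by
      simpa using ((hasDerivAt_id w).const_mul (2 * π * I * (n + 1 / 2) : ℂ)).const_add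
        (π * I * (n + 1 / 2) ^ 2 * τ : ℂ)
    exact ((h1.cexp).const_mul ((-1 : ℂ) ^ n * (n + 1 / 2) ^ k)).congr_deriv (by ring)
  · intro n w hw
    rw [norm_mul]
    exact mul_le_mul_of_nonneg_left
      (norm_thetaTerm_le (le_of_lt hw) le_rfl (k + 1) n) (norm_nonneg _)

/-- The heat equation for the theta series. -/
lemma hasDerivAt_thetaT_tau (k : ℕ) {τ : ℂ} (hτ : 0 < τ.im) (z : ℂ) :
    HasDerivAt (fun t => thetaT k t z) (π * I * thetaT (k + 2) τ z) τ := by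
  obtain ⟨T, hT, hTτ⟩ := exists_between hτ
  have hconv : Convex ℝ {w : ℂ | T < w.im} := convex_halfSpace_im_gt T
  have hmem : τ ∈ {w : ℂ | T < w.im} := hTτ
  unfold thetaT
  rw [← tsum_mul_left]
  refine hasDerivAt_tsum_of_isPreconnected (t := {w : ℂ | T < w.im}) (y₀ := τ)
    (g := fun n w => thetaTerm k n w z)
    (g' := fun n w => π * I * thetaTerm (k + 2) n w z)
    ((summable_thetaBound (k + 2) |z.im| hT (abs_nonneg _)).mul_left ‖(π * I : ℂ)‖)
    (isOpen_lt continuous_const (by fun_prop))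
    hconv.isPreconnected ?_ ?_ hmem (summable_thetaTerm k hτ z) hmem
  · intro n w _
    unfold thetaTerm
    have h1 : HasDerivAt (fun w : ℂ => π * I * (n + 1 / 2) ^ 2 * w + 2 * π * I * (n + 1 / 2) * z)
      (π * I * (n + 1 / 2) ^ 2) w := by
      simpa using ((hasDerivAt_id w).const_mul (π * I * (n + 1 / 2) ^ 2 : ℂ)).add_const
        (2 * π * I * (n + 1 / 2) * z : ℂ)
    exact ((h1.cexp).const_mul ((-1 : ℂ) ^ n * (n + 1 / 2) ^ k)).congr_deriv (by ring)
  · intro n w hw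
    rw [norm_mul]
    exact mul_le_mul_of_nonneg_left
      (norm_thetaTerm_le le_rfl (le_of_lt hw) (k + 2) n) (norm_nonneg _)

lemma thetaJ_eq (τ z : ℂ) : thetaJ τ z = thetaT 0 τ z := by
  rw [thetaJ, thetaT, ← tsum_mul_left]
  refine tsum_congr fun n => ?_
  rw [thetaTerm, pow_zero, mul_one]
  have : (π * I * (n + 1 / 2) ^ 2 * τ + 2 * π * I * (n + 1 / 2) * z : ℂ) =
    (π * I * τ / 4 + π * I * z) + (π * I * τ * n * (n + 1)) + 2 * π * I * z * n := by ring
  rw [this, Complex.exp_add, Complex.exp_add, Complex.exp_add]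
  ring

lemma thetaT_add_one (k : ℕ) (τ z : ℂ) : thetaT k τ (z + 1) = -thetaT k τ z := by
  rw [thetaT, thetaT, ← tsum_neg]
  refine tsum_congr fun n => ?_
  rw [thetaTerm, thetaTerm]
  have : (π * I * (n + 1 / 2) ^ 2 * τ + 2 * π * I * (n + 1 / 2) * (z + 1) : ℂ) =
    (π * I * (n + 1 / 2) ^ 2 * τ + 2 * π * I * (n + 1 / 2) * z) + n * (2 * π * I) + π * I := by
    ring
  rw [this, Complex.exp_add, Complex.exp_add, Complex.exp_int_mul_two_pi_mul_I, Complex.exp_pi_mul_I]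
  ring

/-- Translation by `τ` replaces `∂` by `∂ - 1`, up to the automorphy factor. -/
lemma thetaT_add_tau (k : ℕ) {τ : ℂ} (hτ : 0 < τ.im) (z : ℂ) :
    thetaT k τ (z + τ) = -Complex.exp (-(π * I * τ) - 2 * π * I * z) *
      ∑ j ∈ Finset.range (k + 1), (-1 : ℂ) ^ (k - j) * (k.choose j : ℂ) * thetaT j τ z := by
  have h1 : ∀ j : ℕ, (-1 : ℂ) ^ (k - j) * (k.choose j : ℂ) * thetaT j τ z =
      ∑' n : ℤ, (-1 : ℂ) ^ (k - j) * (k.choose j : ℂ) * thetaTerm j n τ z := fun j => by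
    rw [thetaT, tsum_mul_left]
  simp_rw [h1]
  rw [← Summable.tsum_finsetSum (fun j _ => (summable_thetaTerm j hτ z).mul_left _),
    ← tsum_mul_left, thetaT]
  conv_rhs => rw [← (Equiv.addRight (1 : ℤ)).tsum_eq]
  refine tsum_congr fun n => ?_
  have h2 : ∑ j ∈ Finset.range (k + 1),
      (-1 : ℂ) ^ (k - j) * (k.choose j : ℂ) * thetaTerm j (n + 1) τ z =
      (-1 : ℂ) ^ (n + 1) * (n + 1 / 2) ^ k *
      Complex.exp (π * I * ((n + 1 : ℤ) + 1 / 2) ^ 2 * τ + 2 * π * I * ((n + 1 : ℤ) + 1 / 2) * z) := by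
    have : ((n : ℂ) + 1 / 2) ^ k = (((n + 1 : ℤ) + 1 / 2 : ℂ) + (-1)) ^ k := by
      push_cast; ring
    rw [this, add_pow, Finset.mul_sum, Finset.sum_mul]
    refine Finset.sum_congr rfl fun j _ => ?_
    rw [thetaTerm]
    ring
  simp only [Equiv.coe_addRight]
  rw [h2, thetaTerm]
  have h3 : (π * I * (n + 1 / 2) ^ 2 * τ + 2 * π * I * (n + 1 / 2) * (z + τ) : ℂ) =
    (-(π * I * τ) - 2 * π * I * z) +
      (π * I * ((n + 1 : ℤ) + 1 / 2) ^ 2 * τ + 2 * π * I * ((n + 1 : ℤ) + 1 / 2) * z) := by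
    push_cast; ring
  rw [h3, Complex.exp_add, zpow_add_one₀ (by norm_num : (-1 : ℂ) ≠ 0)]
  ring

lemma thetaT_neg (k : ℕ) (τ z : ℂ) : thetaT k τ (-z) = (-1) ^ (k + 1) * thetaT k τ z := by
  rw [thetaT, thetaT, ← tsum_mul_left, ← ((Equiv.neg ℤ).trans (Equiv.subRight 1)).tsum_eq]
  refine tsum_congr fun n => ?_
  simp only [Equiv.trans_apply, Equiv.neg_apply, Equiv.subRight_apply, thetaTerm]
  push_cast
  have h1 : (-1 : ℂ) ^ (-n - 1) = -(-1 : ℂ) ^ n := by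
    rw [zpow_sub_one₀ (by norm_num : (-1 : ℂ) ≠ 0), zpow_neg, ← inv_zpow]
    norm_num
  have h2 : (-(n : ℂ) - 1 + 1 / 2) = (-1) * (n + 1 / 2) := by ring
  rw [h1, h2, mul_pow, mul_pow]
  ring_nf

lemma thetaT_even_zero {k : ℕ} (hk : Even k) (τ : ℂ) : thetaT k τ 0 = 0 := by
  have h := thetaT_neg k τ 0
  rw [neg_zero, pow_succ, hk.neg_one_pow] at h
  linear_combination (1 / 2 : ℂ) * h

end Theta

/-! ### Theta constants -/

section ThetaNull

open UpperHalfPlane hiding I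
open Filter Topology ModularGroup
open scoped Manifold MatrixGroups ModularForm

lemma thetaTerm_zero_eq (n : ℤ) (τ : ℂ) :
    thetaTerm 0 n τ 0 = Complex.exp (π * I * τ / 4) * jacobiTheta₂_term n ((τ + 1) / 2) τ := by
  have h : (-1 : ℂ) ^ n = Complex.exp (n * (π * I)) := by
    rw [Complex.exp_int_mul, Complex.exp_pi_mul_I]
  rw [thetaTerm, jacobiTheta₂_term, h, pow_zero, mul_one, ← Complex.exp_add, ← Complex.exp_add]
  congr 1
  ring

lemma jacobiTheta₂_half {τ : ℂ} : jacobiTheta₂ ((τ + 1) / 2) τ = 0 := by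
  have h := thetaT_even_zero (k := 0) (by decide) τ
  rw [thetaT] at h
  simp_rw [thetaTerm_zero_eq] at h
  rw [tsum_mul_left] at h
  exact (mul_eq_zero.mp h).resolve_left (Complex.exp_ne_zero _)

lemma thetaNull_eq {τ : ℂ} (hτ : 0 < τ.im) : 2 * π * I * thetaT 1 τ 0 =
    Complex.exp (π * I * τ / 4) * jacobiTheta₂' ((τ + 1) / 2) τ := by
  have hs := (hasSum_jacobiTheta₂'_term ((τ + 1) / 2) hτ).summable
  have h0 := thetaT_even_zero (k := 0) (by decide) τ
  rw [thetaT] at h0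
  rw [thetaT, jacobiTheta₂', ← tsum_mul_left, ← tsum_mul_left,
    ← add_zero (∑' n : ℤ, Complex.exp (π * I * τ / 4) * _)]
  have h0' : (0 : ℂ) = ∑' n : ℤ, π * I * thetaTerm 0 n τ 0 := by
    rw [tsum_mul_left, h0, mul_zero]
  conv_rhs => rw [h0']
  rw [← (hs.mul_left _).tsum_add ((summable_thetaTerm 0 hτ 0).mul_left _)]
  refine tsum_congr fun n => ?_
  have h1 : thetaTerm 1 n τ 0 = (n + 1 / 2) * thetaTerm 0 n τ 0 := by
    rw [thetaTerm, thetaTerm]; ring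
  rw [h1, jacobiTheta₂'_term, thetaTerm_zero_eq]
  ring

/-- The behaviour of the theta null value `∂ϑ(τ,0)` under inversion. -/
lemma thetaNull_inv {τ : ℂ} (hτ : 0 < τ.im) :
    thetaT 1 τ 0 = I / (τ * (-I * τ) ^ (1 / 2 : ℂ)) * thetaT 1 (-1 / τ) 0 := by
  have h0 : τ ≠ 0 := by rintro rfl; simp at hτ
  have him : 0 < (-1 / τ).im := by
    have := (ModularGroup.S • (⟨τ, hτ⟩ : ℍ)).im_pos
    rw [UpperHalfPlane.modular_S_smul] at this
    simpa [neg_div, inv_neg] using this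
  have h1 := thetaNull_eq hτ
  have h2 := thetaNull_eq him
  rw [jacobiTheta₂'_functional_equation] at h1
  have h3 : (τ + 1) / 2 / τ = -((-1 / τ + 1) / 2) + 1 := by field_simp; ring
  rw [h3, jacobiTheta₂'_add_left, jacobiTheta₂_add_left, jacobiTheta₂'_neg_left,
    jacobiTheta₂_neg_left, jacobiTheta₂_half] at h1
  have h4 : Complex.exp (π * I * τ / 4) * Complex.exp (-π * I * ((τ + 1) / 2) ^ 2 / τ) =
      -I * Complex.exp (π * I * (-1 / τ) / 4) := by
    have : -I = Complex.exp (-(π / 2 * I)) := by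
      rw [Complex.exp_neg, Complex.exp_pi_div_two_mul_I, Complex.inv_I]
    rw [this, ← Complex.exp_add, ← Complex.exp_add]
    congr 1
    field_simp
    ring
  have hpi : (2 * π * I : ℂ) ≠ 0 := Complex.two_pi_I_ne_zero
  apply mul_left_cancel₀ hpi
  rw [h1]
  linear_combination (-(1 / (-I * τ) ^ (1 / 2 : ℂ) / τ) *
    jacobiTheta₂' ((-1 / τ + 1) / 2) (-1 / τ)) * h4 - (I / (τ * (-I * τ) ^ (1 / 2 : ℂ))) * h2

lemma thetaNull_pow_inv {τ : ℂ} (hτ : 0 < τ.im) :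
    thetaT 1 (-1 / τ) 0 ^ 8 = τ ^ 12 * thetaT 1 τ 0 ^ 8 := by
  have h0 : τ ≠ 0 := by rintro rfl; simp at hτ
  have h2 : ((-I * τ) ^ (1 / 2 : ℂ)) ^ 2 = -I * τ := by
    have := Complex.cpow_nat_inv_pow (-I * τ) (n := 2) (by norm_num)
    rwa [Nat.cast_ofNat, ← one_div] at this
  have h3 : ((-I * τ) ^ (1 / 2 : ℂ)) ^ 8 = τ ^ 4 := by
    calc _ = (((-I * τ) ^ (1 / 2 : ℂ)) ^ 2) ^ 4 := by ring
      _ = I ^ 4 * τ ^ 4 := by rw [h2]; ring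
      _ = _ := by rw [I_pow_four, one_mul]
  have h8 : I ^ 8 = 1 := by rw [show 8 = 4 * 2 from rfl, pow_mul, I_pow_four, one_pow]
  rw [thetaNull_inv hτ, mul_pow, div_pow, mul_pow, h3, h8]
  field_simp

lemma thetaNull_pow_add_one (τ : ℂ) : thetaT 1 (τ + 1) 0 ^ 8 = thetaT 1 τ 0 ^ 8 := by
  have h : thetaT 1 (τ + 1) 0 = Complex.exp (π * I / 4) * thetaT 1 τ 0 := by
    rw [thetaT, thetaT, ← tsum_mul_left]
    refine tsum_congr fun n => ?_
    obtain ⟨m, hm⟩ := Int.even_mul_succ_self n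
    have hm' : (n : ℂ) * (n + 1) = m + m := by exact_mod_cast hm
    rw [thetaTerm, thetaTerm]
    have : (π * I * (n + 1 / 2) ^ 2 * (τ + 1) + 2 * π * I * (n + 1 / 2) * 0 : ℂ) =
      (π * I / 4) + (π * I * (n + 1 / 2) ^ 2 * τ + 2 * π * I * (n + 1 / 2) * 0) +
        m * (2 * π * I) := by
      linear_combination (π * I : ℂ) * hm'
    rw [this, Complex.exp_add, Complex.exp_add, Complex.exp_int_mul_two_pi_mul_I]
    ring
  rw [h, mul_pow, ← Complex.exp_nat_mul]
  have : ((8 : ℕ) : ℂ) * (π * I / 4) = 2 * π * I := by push_cast; ring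
  rw [this, Complex.exp_two_pi_mul_I, one_mul]

/-- The leading term of `∂ϑ(τ,0)` is `q^{1/8}`, contributed by the indices `n = 0` and `n = -1`. -/
lemma tendsto_thetaNull :
    Tendsto (fun z : ℍ => thetaT 1 z 0 * Complex.exp (-(π * I * z / 4))) atImInfty (𝓝 1) := by
  have him : Tendsto (fun z : ℍ => z.im) atImInfty atTop := tendsto_comap
  have hterm : ∀ (z : ℍ) (n : ℤ), thetaTerm 1 n z 0 * Complex.exp (-(π * I * z / 4)) =
      (-1 : ℂ) ^ n * (n + 1 / 2) * Complex.exp (π * I * (n ^ 2 + n) * z) := by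
    intro z n
    rw [thetaTerm, mul_assoc, ← Complex.exp_add, pow_one]
    congr 2
    ring
  have hnorm : ∀ (z : ℍ) (n : ℤ), ‖(-1 : ℂ) ^ n * (n + 1 / 2) *
      Complex.exp (π * I * (n ^ 2 + n) * z)‖ =
      |(n : ℝ) + 1 / 2| * Real.exp (-(π * (n ^ 2 + n)) * z.im) := by
    intro z n
    rw [norm_mul, norm_mul, norm_negOne_zpow, norm_half, one_mul, Complex.norm_exp]
    congr 2
    have : (π * I * (n ^ 2 + n) * z : ℂ) = ((π * ((n : ℝ) ^ 2 + n) : ℝ) : ℂ) * (I * z) := by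
      push_cast; ring
    rw [this, Complex.re_ofReal_mul]
    simp
  have hnn : ∀ n : ℤ, (0 : ℝ) ≤ (n : ℝ) ^ 2 + n := by
    intro n
    have : (0 : ℤ) ≤ n ^ 2 + n := by
      rcases le_or_gt 0 n with h | h
      · positivity
      · nlinarith
    exact_mod_cast this
  have hs : Summable fun n : ℤ => |(n : ℝ) + 1 / 2| * Real.exp (-(π * (n ^ 2 + n)) * 1) := by
    refine ((summable_thetaBound 1 0 one_pos le_rfl).mul_right (Real.exp (π / 4))).congr fun n => ?_
    rw [thetaBound, pow_one, mul_assoc, ← Real.exp_add]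
    congr 2
    ring
  have key := tendsto_tsum_of_dominated_convergence (𝓕 := atImInfty)
    (f := fun (z : ℍ) (n : ℤ) => (-1 : ℂ) ^ n * (n + 1 / 2) *
      Complex.exp (π * I * (n ^ 2 + n) * z))
    (g := fun n : ℤ => if n ∈ ({0, -1} : Finset ℤ) then (1 / 2 : ℂ) else 0) hs ?_ ?_
  · rw [tsum_eq_sum (s := {0, -1}) (fun n hn => if_neg hn)] at key
    have h1 : ∑ n ∈ ({0, -1} : Finset ℤ),
      (if n ∈ ({0, -1} : Finset ℤ) then (1 / 2 : ℂ) else 0) = 1 := by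
      rw [Finset.sum_pair (by norm_num)]; norm_num
    rw [h1] at key
    refine key.congr fun z => ?_
    rw [thetaT, ← tsum_mul_right]
    exact tsum_congr fun n => (hterm z n).symm
  · intro n
    by_cases hn : n ∈ ({0, -1} : Finset ℤ)
    · rw [if_pos hn]
      refine tendsto_const_nhds.congr fun z => ?_
      rcases Finset.mem_insert.mp hn with rfl | hn
      · simp
      · obtain rfl := Finset.mem_singleton.mp hn
        norm_num
    · rw [if_neg hn, tendsto_zero_iff_norm_tendsto_zero]
      simp only [hnorm]
      rw [← mul_zero |(n : ℝ) + 1 / 2|]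
      refine Tendsto.const_mul _ (Real.tendsto_exp_atBot.comp ?_)
      refine Tendsto.const_mul_atTop_of_neg ?_ him
      have h3 : (0 : ℤ) < n ^ 2 + n := by
        simp only [Finset.mem_insert, Finset.mem_singleton, not_or] at hn
        rcases lt_or_gt_of_ne hn.1 with h | h
        · have : n ≤ -2 := by omega
          nlinarith
        · positivity
      have h4 : (0 : ℝ) < (n : ℝ) ^ 2 + n := by exact_mod_cast h3
      have := mul_pos Real.pi_pos h4
      linarith
  · filter_upwards [him.eventually_ge_atTop 1] with z hz n
    rw [hnorm]
    refine mul_le_mul_of_nonneg_left (Real.exp_le_exp.mpr ?_) (abs_nonneg _)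
    have := mul_nonneg Real.pi_pos.le (hnn n)
    nlinarith

lemma thetaNull_mdiff : MDiff (fun z : ℍ => thetaT 1 z 0 ^ 8) := by
  rw [UpperHalfPlane.mdifferentiable_iff]
  refine DifferentiableOn.congr (f := fun t => thetaT 1 t 0 ^ 8) (fun t ht =>
    ((hasDerivAt_thetaT_tau 1 ht 0).differentiableAt.pow 8).differentiableWithinAt) fun t ht => ?_
  simp [ofComplex_apply_of_im_pos ht]

lemma thetaNull_slash (γ : SL(2, ℤ)) :
    (fun z : ℍ => thetaT 1 z 0 ^ 8) ∣[(12 : ℤ)] γ = fun z : ℍ => thetaT 1 z 0 ^ 8 := by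
  refine SlashInvariantForm.slash_action_generators_SL2Z ?_ ?_ γ
  · ext z
    rw [ModularForm.SL_slash_apply, UpperHalfPlane.modular_S_smul]
    have h := thetaNull_pow_inv z.im_pos
    have hz := z.ne_zero
    have h2 : (((UpperHalfPlane.mk (-(z : ℂ))⁻¹ z.im_inv_neg_coe_pos : ℍ)) : ℂ) = -1 / (z : ℂ) := by
      change (-(z : ℂ))⁻¹ = _
      rw [inv_neg, neg_div, one_div]
    rw [h2, denom_S]
    have h : thetaT 1 (-1 / (z : ℂ)) 0 ^ 8 = (z : ℂ) ^ 12 * thetaT 1 z 0 ^ 8 := h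
    rw [h, zpow_neg]
    norm_cast
    field_simp
  · ext z
    rw [ModularForm.SL_slash_apply, UpperHalfPlane.modular_T_smul]
    have h2 : (((1 : ℝ) +ᵥ z : ℍ) : ℂ) = (z : ℂ) + 1 := by
      rw [UpperHalfPlane.coe_vadd]; push_cast; ring
    have h3 : denom T z = 1 := by
      rw [ModularGroup.denom_apply]; simp [ModularGroup.T]
    rw [h2, thetaNull_pow_add_one, h3, one_zpow, mul_one]

lemma thetaNull_isZero : IsZeroAtImInfty (fun z : ℍ => thetaT 1 z 0 ^ 8) := by
  have him : Tendsto (fun z : ℍ => z.im) atImInfty atTop := tendsto_comap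
  have h : Tendsto (fun z : ℍ => Complex.exp (π * I * z / 4)) atImInfty (𝓝 0) := by
    rw [tendsto_zero_iff_norm_tendsto_zero]
    have : ∀ z : ℍ, ‖Complex.exp (π * I * z / 4)‖ = Real.exp (-(π / 4) * z.im) := by
      intro z
      rw [Complex.norm_exp]
      congr 1
      have : (π * I * z / 4 : ℂ) = ((π / 4 : ℝ) : ℂ) * (I * z) := by push_cast; ring
      rw [this, Complex.re_ofReal_mul]
      simp
    simp only [this]
    refine Real.tendsto_exp_atBot.comp (Tendsto.const_mul_atTop_of_neg ?_ him)
    have := Real.pi_pos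
    linarith
  have h2 := (tendsto_thetaNull.mul h).pow 8
  rw [mul_zero, zero_pow (by norm_num)] at h2
  refine h2.congr fun z => ?_
  rw [mul_assoc, ← Complex.exp_add]
  simp

/-- Jacobi's derivative formula, up to a constant: `(∂ϑ(τ,0))⁸` is a cusp form of weight `12`,
hence a multiple of `η²⁴`. -/
lemma thetaNull_pow_eq :
    ∃ c : ℂ, c ≠ 0 ∧ ∀ τ : ℂ, 0 < τ.im → thetaT 1 τ 0 ^ 8 = c * etaD τ ^ 24 := by
  obtain ⟨c, hc⟩ := CuspForm.exists_smul_discriminant_of_weight_eq_twelve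
    (cuspOf thetaNull_mdiff thetaNull_slash thetaNull_isZero)
  have h1 : ∀ z : ℍ, thetaT 1 z 0 ^ 8 = c * etaD z ^ 24 := by
    intro z
    have := (congrArg (fun g => g z) hc).symm
    rw [etaD_eq]
    exact this
  refine ⟨c, ?_, fun τ hτ => h1 ⟨τ, hτ⟩⟩
  rintro rfl
  have h2 : ∀ z : ℍ, thetaT 1 z 0 = 0 := fun z => by
    have := h1 z
    rw [zero_mul] at this
    exact pow_eq_zero_iff (by norm_num) |>.mp this
  have h3 := tendsto_thetaNull
  simp only [h2, zero_mul] at h3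
  exact zero_ne_one (tendsto_nhds_unique tendsto_const_nhds h3)

lemma thetaNull_ne_zero {τ : ℂ} (hτ : 0 < τ.im) : thetaT 1 τ 0 ≠ 0 := by
  obtain ⟨c, hc, h⟩ := thetaNull_pow_eq
  intro h0
  have := h τ hτ
  rw [h0, zero_pow (by norm_num)] at this
  exact mul_ne_zero hc (pow_ne_zero _ (etaD_ne_zero hτ)) this.symm

lemma eventuallyEq_of_upper {f g : ℂ → ℂ} (h : ∀ t : ℂ, 0 < t.im → f t = g t) {τ : ℂ}
    (hτ : 0 < τ.im) : f =ᶠ[𝓝 τ] g := by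
  filter_upwards [isOpen_upperHalfPlaneSet.mem_nhds hτ] with w hw using h w hw

/-- The heat equation turns a `τ`-derivative of `∂ᵏϑ(τ,0)` into `∂ᵏ⁺²ϑ(τ,0)`. -/
lemma thetaNull_step {k : ℕ} {c c' : ℂ → ℂ} (hc : HasD c c')
    (h : ∀ τ : ℂ, 0 < τ.im → thetaT k τ 0 = thetaT 1 τ 0 * c τ)
    (h3 : ∀ τ : ℂ, 0 < τ.im → thetaT 3 τ 0 = thetaT 1 τ 0 * (Eis2 τ / 4)) (τ : ℂ) (hτ : 0 < τ.im) :
    thetaT (k + 2) τ 0 = thetaT 1 τ 0 * (Eis2 τ / 4 * c τ + 2 * c' τ) := by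
  have h1 := ((hasDerivAt_thetaT_tau 1 hτ 0).mul (hc τ hτ)).congr_of_eventuallyEq
    (eventuallyEq_of_upper h hτ)
  have h2 := (hasDerivAt_thetaT_tau k hτ 0).unique h1
  have hpi : (π * I : ℂ) ≠ 0 := mul_ne_zero (by exact_mod_cast Real.pi_ne_zero) I_ne_zero
  apply mul_left_cancel₀ hpi
  rw [h2, h3 τ hτ]
  ring

lemma thetaNull_three (τ : ℂ) (hτ : 0 < τ.im) :
    thetaT 3 τ 0 = thetaT 1 τ 0 * (Eis2 τ / 4) := by
  obtain ⟨c, -, h⟩ := thetaNull_pow_eq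
  have h1 := (((hasD_etaD τ hτ).pow 24).const_mul c).congr_of_eventuallyEq
    (eventuallyEq_of_upper h hτ)
  have h2 := ((hasDerivAt_thetaT_tau 1 hτ 0).pow 8).unique h1
  have hpi : (π * I : ℂ) ≠ 0 := mul_ne_zero (by exact_mod_cast Real.pi_ne_zero) I_ne_zero
  have h0 := pow_ne_zero 7 (thetaNull_ne_zero hτ)
  apply mul_left_cancel₀ hpi
  apply mul_left_cancel₀ h0
  have h4 := h τ hτ
  push_cast at h2
  linear_combination (1 / 8 : ℂ) * h2 - (π * I / 4 * Eis2 τ : ℂ) * h4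

lemma HasD.congr' {c c₁ c₂ : ℂ → ℂ} (h : HasD c c₁) (h' : ∀ τ, c₁ τ = c₂ τ) : HasD c c₂ := by
  have : c₁ = c₂ := funext h'
  exact this ▸ h

lemma HasD.add {a a' b b' : ℂ → ℂ} (ha : HasD a a') (hb : HasD b b') :
    HasD (fun τ => a τ + b τ) (fun τ => a' τ + b' τ) := fun τ hτ =>
  ((ha τ hτ).add (hb τ hτ)).congr_deriv (by ring)

lemma HasD.mul {a a' b b' : ℂ → ℂ} (ha : HasD a a') (hb : HasD b b') :
    HasD (fun τ => a τ * b τ) (fun τ => a' τ * b τ + a τ * b' τ) := fun τ hτ =>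
  ((ha τ hτ).mul (hb τ hτ)).congr_deriv (by ring)

lemma hasD_const (a : ℂ) : HasD (fun _ => a) (fun _ => 0) := fun τ _ => by
  simpa using hasDerivAt_const τ a

lemma HasD.const_mul {a a' : ℂ → ℂ} (c : ℂ) (ha : HasD a a') :
    HasD (fun τ => c * a τ) (fun τ => c * a' τ) := fun τ hτ =>
  ((ha τ hτ).const_mul c).congr_deriv (by ring)

lemma hasD_quadratic (a b : ℂ) : HasD (fun τ => a * Eis2 τ ^ 2 + b * Eis4 τ)
    (fun τ => a * (2 * Eis2 τ * ((Eis2 τ ^ 2 - Eis4 τ) / 12))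
      + b * ((Eis2 τ * Eis4 τ - Eis6 τ) / 3)) := by
  have h := ((hasD_Eis2.mul hasD_Eis2).const_mul a).add (hasD_Eis4.const_mul b)
  have e : (fun τ => a * Eis2 τ ^ 2 + b * Eis4 τ) =
    fun τ => a * (Eis2 τ * Eis2 τ) + b * Eis4 τ := by ext; ring
  rw [e]
  exact h.congr' fun τ => by ring

lemma hasD_cubic (a b c : ℂ) :
    HasD (fun τ => a * Eis2 τ ^ 3 + b * (Eis2 τ * Eis4 τ) + c * Eis6 τ)
    (fun τ => a * (3 * Eis2 τ ^ 2 * ((Eis2 τ ^ 2 - Eis4 τ) / 12))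
      + b * ((Eis2 τ ^ 2 - Eis4 τ) / 12 * Eis4 τ + Eis2 τ * ((Eis2 τ * Eis4 τ - Eis6 τ) / 3))
      + c * ((Eis2 τ * Eis6 τ - Eis4 τ ^ 2) / 2)) := by
  have h := (((hasD_Eis2.mul (hasD_Eis2.mul hasD_Eis2)).const_mul a).add
    ((hasD_Eis2.mul hasD_Eis4).const_mul b)).add (hasD_Eis6.const_mul c)
  have e : (fun τ => a * Eis2 τ ^ 3 + b * (Eis2 τ * Eis4 τ) + c * Eis6 τ) =
    fun τ => a * (Eis2 τ * (Eis2 τ * Eis2 τ)) + b * (Eis2 τ * Eis4 τ) + c * Eis6 τ := by ext; ring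
  rw [e]
  exact h.congr' fun τ => by ring

lemma thetaNull_five (τ : ℂ) (hτ : 0 < τ.im) :
    thetaT 5 τ 0 = thetaT 1 τ 0 * (5 / 48 * Eis2 τ ^ 2 + (-1 / 24) * Eis4 τ) := by
  rw [thetaNull_step (hasD_Eis2.const_mul (1 / 4))
    (fun t ht => by rw [thetaNull_three t ht]; ring) thetaNull_three τ hτ]
  ring

lemma thetaNull_seven (τ : ℂ) (hτ : 0 < τ.im) :
    thetaT 7 τ 0 = thetaT 1 τ 0 *
      (35 / 576 * Eis2 τ ^ 3 + (-7 / 96) * (Eis2 τ * Eis4 τ) + 1 / 36 * Eis6 τ) := by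
  rw [thetaNull_step (hasD_quadratic _ _) thetaNull_five thetaNull_three τ hτ]
  ring

lemma thetaNull_nine (τ : ℂ) (hτ : 0 < τ.im) :
    thetaT 9 τ 0 = thetaT 1 τ 0 *
      (35 / 768 * Eis2 τ ^ 4 - 7 / 64 * (Eis2 τ ^ 2 * Eis4 τ) - 1 / 64 * Eis4 τ ^ 2
        + 1 / 12 * (Eis2 τ * Eis6 τ)) := by
  rw [thetaNull_step (hasD_cubic _ _ _) thetaNull_seven thetaNull_three τ hτ]
  ring

end ThetaNull

/-! ### Entire functions with the index-one transformation law -/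

section QuasiPeriodic

open Filter Topology

/-- Entire functions with the elliptic transformation law of Jacobi forms of index `1`. -/
structure QP (τ : ℂ) (f : ℂ → ℂ) : Prop where
  diff : Differentiable ℂ f
  add_one : ∀ z, f (z + 1) = f z
  add_tau : ∀ z, f (z + τ) = Complex.exp (-(2 * π * I * (τ + 2 * z))) * f z

lemma QP.add {τ : ℂ} {f g : ℂ → ℂ} (hf : QP τ f) (hg : QP τ g) : QP τ (fun z => f z + g z) where
  diff := hf.diff.add hg.diff
  add_one z := by rw [hf.add_one, hg.add_one]
  add_tau z := by rw [hf.add_tau, hg.add_tau]; ring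

lemma QP.const_mul {τ : ℂ} {f : ℂ → ℂ} (hf : QP τ f) (a : ℂ) : QP τ (fun z => a * f z) where
  diff := hf.diff.const_mul a
  add_one z := by rw [hf.add_one]
  add_tau z := by rw [hf.add_tau]; ring

/-- The period integral of an entire `1`-periodic function does not depend on the height. -/
lemma integral_shift {g : ℂ → ℂ} (hg : Differentiable ℂ g) (h1 : ∀ z, g (z + 1) = g z) (w : ℂ) :
    ∫ x in (0 : ℝ)..1, g (x + w) = ∫ x in (0 : ℝ)..1, g x := by
  obtain ⟨G, hG⟩ := (hg.differentiableOn (s := Metric.ball 0 (‖w‖ + 3))).isExactOn_ball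
  have hmem : ∀ v ∈ Metric.ball (0 : ℂ) (‖w‖ + 1), ∀ x : ℝ, 0 ≤ x → x ≤ 1 →
      (x : ℂ) + v ∈ Metric.ball (0 : ℂ) (‖w‖ + 3) := by
    intro v hv x hx0 hx1
    rw [mem_ball_zero_iff] at hv ⊢
    have := norm_add_le (x : ℂ) v
    rw [Complex.norm_real, Real.norm_of_nonneg hx0] at this
    linarith
  have hint : ∀ v ∈ Metric.ball (0 : ℂ) (‖w‖ + 1),
      ∫ x in (0 : ℝ)..1, g (x + v) = G (1 + v) - G v := by
    intro v hv
    have := intervalIntegral.integral_eq_sub_of_hasDerivAt (a := 0) (b := 1)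
      (f := fun x : ℝ => G (x + v)) (f' := fun x : ℝ => g (x + v)) ?_ ?_
    · simpa using this
    · intro x hx
      rw [Set.uIcc_of_le zero_le_one] at hx
      exact ((hG _ (hmem v hv x hx.1 hx.2)).comp_add_const (x : ℂ) v).comp_ofReal
    · exact (hg.continuous.comp (by fun_prop)).intervalIntegrable _ _
  have hconst : ∀ v ∈ Metric.ball (0 : ℂ) (‖w‖ + 1), G (1 + v) - G v = G (1 + 0) - G 0 := by
    intro v hv
    have hd : ∀ v ∈ Metric.ball (0 : ℂ) (‖w‖ + 1), HasDerivAt (fun v => G (1 + v) - G v) 0 v := by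
      intro v hv
      have e1 := hG _ (by simpa using hmem v hv 1 zero_le_one le_rfl)
      have e2 := hG _ (by simpa using hmem v hv 0 le_rfl zero_le_one)
      refine ((e1.comp_const_add 1 v).sub e2).congr_deriv ?_
      rw [add_comm, h1, sub_self]
    exact Metric.isOpen_ball.is_const_of_deriv_eq_zero (convex_ball _ _).isPreconnected
      (fun v hv => (hd v hv).differentiableAt.differentiableWithinAt)
      (fun v hv => (hd v hv).deriv) hv (Metric.mem_ball_self (by positivity))
  have hw : w ∈ Metric.ball (0 : ℂ) (‖w‖ + 1) := by simp
  have h0 : (0 : ℂ) ∈ Metric.ball (0 : ℂ) (‖w‖ + 1) := Metric.mem_ball_self (by positivity)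
  rw [hint w hw, hconst w hw, ← hint 0 h0]
  simp

/-- The Fourier coefficients of a `1`-periodic function. -/
def coef (f : ℂ → ℂ) (n : ℤ) : ℂ :=
  ∫ x in (0 : ℝ)..1, f x * Complex.exp (-(2 * π * I * n * x))

lemma coef_add {f g : ℂ → ℂ} (hf : Differentiable ℂ f) (hg : Differentiable ℂ g) (a b : ℂ) (n : ℤ) :
    coef (fun z => a * f z + b * g z) n = a * coef f n + b * coef g n := by
  have hcf : Continuous fun x : ℝ => f x := hf.continuous.comp Complex.continuous_ofReal
  have hcg : Continuous fun x : ℝ => g x := hg.continuous.comp Complex.continuous_ofReal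
  have hif : Continuous fun x : ℝ => a * (f x * Complex.exp (-(2 * π * I * n * x))) :=
    continuous_const.mul (hcf.mul (by fun_prop))
  have hig : Continuous fun x : ℝ => b * (g x * Complex.exp (-(2 * π * I * n * x))) :=
    continuous_const.mul (hcg.mul (by fun_prop))
  rw [coef, coef, coef, ← intervalIntegral.integral_const_mul,
    ← intervalIntegral.integral_const_mul, ← intervalIntegral.integral_add
      (hif.intervalIntegrable _ _) (hig.intervalIntegrable _ _)]
  congr 1
  ext x
  ring

lemma exp_int_period (n : ℤ) (z : ℂ) :
    Complex.exp (-(2 * π * I * n * (z + 1))) = Complex.exp (-(2 * π * I * n * z)) := by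
  have : -(2 * π * I * n * (z + 1)) = -(2 * π * I * n * z) + (-n : ℤ) * (2 * π * I) := by
    push_cast; ring
  rw [this, Complex.exp_add, Complex.exp_int_mul_two_pi_mul_I, mul_one]

lemma coef_shift {f : ℂ → ℂ} (hf : Differentiable ℂ f) (h1 : ∀ z, f (z + 1) = f z) (n : ℤ) (w : ℂ) :
    ∫ x in (0 : ℝ)..1, f (x + w) * Complex.exp (-(2 * π * I * n * (x + w))) = coef f n :=
  integral_shift (g := fun z => f z * Complex.exp (-(2 * π * I * n * z)))
    (hf.mul (by fun_prop)) (fun z => by rw [h1, exp_int_period]) w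

/-- Comparing the period integrals at heights `0` and `τ` relates the coefficients of index `n`
and `n + 2`. -/
lemma QP.coef_rec {τ : ℂ} {f : ℂ → ℂ} (hf : QP τ f) (n : ℤ) :
    coef f n = Complex.exp (-(2 * π * I * (n + 1) * τ)) * coef f (n + 2) := by
  rw [← coef_shift hf.diff hf.add_one n τ, coef, ← intervalIntegral.integral_const_mul]
  congr 1
  ext x
  rw [hf.add_tau]
  have h : Complex.exp (-(2 * π * I * (τ + 2 * x))) * Complex.exp (-(2 * π * I * n * (x + τ))) =
      Complex.exp (-(2 * π * I * (n + 1) * τ)) *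
        Complex.exp (-(2 * π * I * ((n + 2 : ℤ) : ℂ) * x)) := by
    rw [← Complex.exp_add, ← Complex.exp_add]
    congr 1
    push_cast
    ring
  linear_combination f x * h

lemma QP.coef_eq_zero {τ : ℂ} {f : ℂ → ℂ} (hf : QP τ f) (h0 : coef f 0 = 0) (h1 : coef f 1 = 0)
    (n : ℤ) : coef f n = 0 := by
  have up : ∀ n, coef f n = 0 → coef f (n + 2) = 0 := fun n h => by
    rw [hf.coef_rec] at h
    exact (mul_eq_zero.mp h).resolve_left (Complex.exp_ne_zero _)
  have down : ∀ n, coef f (n + 2) = 0 → coef f n = 0 := fun n h => by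
    rw [hf.coef_rec, h, mul_zero]
  have key : ∀ n : ℤ, coef f n = 0 ∧ coef f (n + 1) = 0 := by
    intro n
    induction n using Int.induction_on with
    | zero => exact ⟨h0, h1⟩
    | succ i ih => exact ⟨ih.2, by rw [add_assoc]; exact up _ ih.1⟩
    | pred i ih =>
      refine ⟨down _ ?_, ?_⟩
      · have : (-(i : ℤ) - 1 + 2) = -i + 1 := by ring
        rw [this]; exact ih.2
      · rw [sub_add_cancel]; exact ih.1
  exact (key n).1

/-- Uniqueness of Fourier series, applied to the restriction of `f` to the horizontal line
through `w`; by `coef_shift` its Fourier coefficients are multiples of `coef f n`. -/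
lemma eq_zero_of_coef {f : ℂ → ℂ} (hf : Differentiable ℂ f) (h1 : ∀ z, f (z + 1) = f z)
    (h : ∀ n, coef f n = 0) (w : ℂ) : f w = 0 := by
  have hper : Function.Periodic (fun x : ℝ => f (x + w)) 1 := fun x => by
    have : ((x + 1 : ℝ) : ℂ) + w = (x + w) + 1 := by push_cast; ring
    simp only [this, h1]
  have hcont : Continuous (fun x : ℝ => f (x + w)) := hf.continuous.comp (by fun_prop)
  obtain ⟨F, hF⟩ : ∃ F : C(AddCircle (1 : ℝ), ℂ),
      ∀ x : ℝ, F (x : AddCircle (1 : ℝ)) = f (x + w) :=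
    ⟨⟨hper.lift, hcont.quotient_liftOn' _⟩, fun x => rfl⟩
  have hc : ∀ n, fourierCoeff F n = 0 := by
    intro n
    rw [fourierCoeff_eq_intervalIntegral F n 0]
    have h2 := coef_shift hf h1 n w
    rw [h] at h2
    have h3 : ∫ x in (0 : ℝ)..0 + 1, fourier (-n) (x : AddCircle (1 : ℝ)) • F x =
        ∫ x in (0 : ℝ)..1, Complex.exp (2 * π * I * n * w) *
          (f (x + w) * Complex.exp (-(2 * π * I * n * (x + w)))) := by
      rw [zero_add]
      congr 1
      ext x
      rw [fourier_coe_apply, hF, smul_eq_mul]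
      have : Complex.exp (2 * π * I * ((-n : ℤ) : ℂ) * x / ((1 : ℝ) : ℂ)) =
          Complex.exp (2 * π * I * n * w) * Complex.exp (-(2 * π * I * n * (x + w))) := by
        rw [← Complex.exp_add]
        congr 1
        push_cast
        ring
      rw [this]
      ring
    rw [h3, intervalIntegral.integral_const_mul, h2, mul_zero, smul_zero]
  have hs : Summable (fourierCoeff F) := by
    have : fourierCoeff F = fun _ => 0 := funext hc
    rw [this]; exact summable_zero
  have h4 := hasSum_fourier_series_of_summable hs
  have h5 : F = 0 := h4.unique (by
    have : (fun i => fourierCoeff F i • fourier (T := (1 : ℝ)) i) = fun _ => 0 := by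
      funext i
      ext x
      simp [hc i]
    rw [this]
    exact hasSum_zero)
  have h6 := hF 0
  rw [h5] at h6
  simpa using h6.symm

/-- The space of index-one functions is at most two-dimensional. If it contains `A` with
`A(0) = 0` and nonzero second derivative at the origin, and `C` with `C(0) ≠ 0`, then its elements
are determined by the value and the second derivative at the origin. -/
lemma QP.eq_zero {τ : ℂ} {A C F : ℂ → ℂ} (hA : QP τ A) (hC : QP τ C) (hF : QP τ F)
    (hA0 : A 0 = 0) (hA2 : deriv (deriv A) 0 ≠ 0) (hC0 : C 0 ≠ 0)
    (hF0 : F 0 = 0) (hF2 : deriv (deriv F) 0 = 0) (z : ℂ) : F z = 0 := by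
  have hAne : ∀ a : ℂ, (∀ z, a * A z = 0) → a = 0 := by
    intro a ha
    by_contra hne
    have : A = fun _ => 0 := funext fun z => (mul_eq_zero.mp (ha z)).resolve_left hne
    apply hA2
    rw [this]
    simp
  have comb : ∀ a b : ℂ, a * coef A 0 + b * coef C 0 = 0 → a * coef A 1 + b * coef C 1 = 0 →
      a = 0 ∧ b = 0 := by
    intro a b h0 h1
    have hq := (hA.const_mul a).add (hC.const_mul b)
    have hz := eq_zero_of_coef hq.diff hq.add_one (hq.coef_eq_zero
      (by rw [coef_add hA.diff hC.diff, h0]) (by rw [coef_add hA.diff hC.diff, h1]))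
    have hb : b = 0 := by
      have := hz 0
      rw [hA0, mul_zero, zero_add] at this
      exact (mul_eq_zero.mp this).resolve_right hC0
    refine ⟨hAne a fun z => ?_, hb⟩
    have := hz z
    rwa [hb, zero_mul, add_zero] at this
  -- An index-one function is determined by its Fourier coefficients of index `0` and `1`, so by
  -- Cramer's rule `d F = x A + y C`.
  set d := coef A 0 * coef C 1 - coef A 1 * coef C 0 with hd
  have hd0 : d ≠ 0 := by
    intro hd0
    obtain ⟨h1, h2⟩ := comb (coef C 0) (-coef A 0) (by ring) (by linear_combination -hd0)
    obtain ⟨h3, h4⟩ := comb (coef C 1) (-coef A 1) (by linear_combination hd0) (by ring)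
    rw [neg_eq_zero] at h2 h4
    exact one_ne_zero (comb 1 0 (by rw [h2]; ring) (by rw [h4]; ring)).1
  set x := coef F 0 * coef C 1 - coef F 1 * coef C 0
  set y := coef A 0 * coef F 1 - coef A 1 * coef F 0
  have hq := ((hF.const_mul d).add (((hA.const_mul x).add (hC.const_mul y)).const_mul (-1)))
  have hAC := ((hA.const_mul x).add (hC.const_mul y)).diff
  have hz := eq_zero_of_coef hq.diff hq.add_one (hq.coef_eq_zero
    (by rw [coef_add hF.diff hAC, coef_add hA.diff hC.diff]; ring)
    (by rw [coef_add hF.diff hAC, coef_add hA.diff hC.diff]; ring))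
  have hy : y = 0 := by
    have := hz 0
    rw [hF0, hA0] at this
    refine (mul_eq_zero.mp (?_ : y * C 0 = 0)).resolve_right hC0
    linear_combination -this
  have hFA : (fun z => d * F z) = fun z => x * A z := by
    ext z
    have := hz z
    rw [hy] at this
    linear_combination this
  have hx : x = 0 := by
    have h2 := congrArg (fun g => deriv (deriv g) 0) hFA
    simp only [deriv_const_mul_field'] at h2
    rw [hF2, mul_zero] at h2
    exact (mul_eq_zero.mp h2.symm).resolve_right hA2
  have := congrFun hFA z
  simp only [hx, zero_mul] at this
  exact (mul_eq_zero.mp this).resolve_left hd0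

end QuasiPeriodic

/-! ### Hirota derivatives and the heat operator -/

section Heat

open Filter Topology

/-- The Hirota bilinear derivative `∑ⱼ (-1)ʲ (2n choose j) ∂ʲϑ · ∂²ⁿ⁻ʲϑ` of order `2n`. -/
def hirota (n : ℕ) (τ z : ℂ) : ℂ :=
  ∑ j ∈ Finset.range (2 * n + 1),
    (-1 : ℂ) ^ j * ((2 * n).choose j : ℂ) * (thetaT j τ z * thetaT (2 * n - j) τ z)

lemma hirota_zero (τ z : ℂ) : hirota 0 τ z = thetaT 0 τ z * thetaT 0 τ z := by
  simp [hirota]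

lemma hirota_one (τ z : ℂ) : hirota 1 τ z =
    2 * (thetaT 0 τ z * thetaT 2 τ z) + (-2) * (thetaT 1 τ z * thetaT 1 τ z) := by
  simp [hirota, Finset.sum_range_succ, Nat.choose]
  ring

lemma hirota_two (τ z : ℂ) : hirota 2 τ z =
    2 * (thetaT 0 τ z * thetaT 4 τ z) + (-8) * (thetaT 1 τ z * thetaT 3 τ z)
      + 6 * (thetaT 2 τ z * thetaT 2 τ z) := by
  simp [hirota, Finset.sum_range_succ, Nat.choose]
  ring

lemma hirota_three (τ z : ℂ) : hirota 3 τ z =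
    2 * (thetaT 0 τ z * thetaT 6 τ z) + (-12) * (thetaT 1 τ z * thetaT 5 τ z)
      + 30 * (thetaT 2 τ z * thetaT 4 τ z) + (-20) * (thetaT 3 τ z * thetaT 3 τ z) := by
  simp [hirota, Finset.sum_range_succ, Nat.choose]
  ring

lemma hirota_four (τ z : ℂ) : hirota 4 τ z =
    2 * (thetaT 0 τ z * thetaT 8 τ z) + (-16) * (thetaT 1 τ z * thetaT 7 τ z)
      + 56 * (thetaT 2 τ z * thetaT 6 τ z) + (-112) * (thetaT 3 τ z * thetaT 5 τ z)
      + 70 * (thetaT 4 τ z * thetaT 4 τ z) := by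
  simp [hirota, Finset.sum_range_succ, Nat.choose]
  ring

/-- `g` is the second derivative of `f` on all of `ℂ`. -/
def HasD2 (f g : ℂ → ℂ) : Prop :=
  ∃ f₁ : ℂ → ℂ, (∀ z, HasDerivAt f (f₁ z) z) ∧ ∀ z, HasDerivAt f₁ (g z) z

lemma HasD2.deriv2 {f g : ℂ → ℂ} (h : HasD2 f g) (z : ℂ) : deriv (deriv f) z = g z := by
  obtain ⟨f₁, h1, h2⟩ := h
  have : deriv f = f₁ := funext fun z => (h1 z).deriv
  rw [this, (h2 z).deriv]

lemma HasD2.differentiable {f g : ℂ → ℂ} (h : HasD2 f g) : Differentiable ℂ f := by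
  obtain ⟨f₁, h1, -⟩ := h
  exact fun z => (h1 z).differentiableAt

lemma HasD2.add {f g f' g' : ℂ → ℂ} (h : HasD2 f g) (h' : HasD2 f' g') :
    HasD2 (fun z => f z + f' z) (fun z => g z + g' z) := by
  obtain ⟨a, h1, h2⟩ := h
  obtain ⟨b, h3, h4⟩ := h'
  exact ⟨fun z => a z + b z, fun z => (h1 z).add (h3 z), fun z => (h2 z).add (h4 z)⟩

lemma HasD2.const_mul {f g : ℂ → ℂ} (c : ℂ) (h : HasD2 f g) :
    HasD2 (fun z => c * f z) (fun z => c * g z) := by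
  obtain ⟨a, h1, h2⟩ := h
  exact ⟨fun z => c * a z, fun z => (h1 z).const_mul c, fun z => (h2 z).const_mul c⟩

lemma hasD2_thetaT_mul (a b : ℕ) {τ : ℂ} (hτ : 0 < τ.im) :
    HasD2 (fun z => thetaT a τ z * thetaT b τ z) (fun z => (2 * π * I) ^ 2 *
      (thetaT (a + 2) τ z * thetaT b τ z + 2 * (thetaT (a + 1) τ z * thetaT (b + 1) τ z)
        + thetaT a τ z * thetaT (b + 2) τ z)) := by
  refine ⟨fun z => 2 * π * I * (thetaT (a + 1) τ z * thetaT b τ z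
    + thetaT a τ z * thetaT (b + 1) τ z), fun z => ?_, fun z => ?_⟩
  · exact ((hasDerivAt_thetaT_z a hτ z).mul (hasDerivAt_thetaT_z b hτ z)).congr_deriv (by ring)
  · exact ((((hasDerivAt_thetaT_z (a + 1) hτ z).mul (hasDerivAt_thetaT_z b hτ z)).add
      ((hasDerivAt_thetaT_z a hτ z).mul (hasDerivAt_thetaT_z (b + 1) hτ z))).const_mul
        (2 * π * I)).congr_deriv (by ring)

/-- On the upper half-plane, `φ` is regular enough for the heat operator of index one, and the
operator maps it to `ψ`. -/
def HeatTo (φ ψ : ℂ → ℂ → ℂ) : Prop :=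
  ∀ τ : ℂ, 0 < τ.im → ∃ φt φzz : ℂ → ℂ, (∀ z, HasDerivAt (fun t => φ t z) (2 * π * I * φt z) τ) ∧
    HasD2 (φ τ) (fun z => (2 * π * I) ^ 2 * φzz z) ∧ ∀ z, ψ τ z = 12 * φt z - 3 * φzz z

lemma HeatTo.congr {φ ψ ψ' : ℂ → ℂ → ℂ} (h : HeatTo φ ψ)
    (h' : ∀ τ z, ψ τ z = ψ' τ z) : HeatTo φ ψ' := by
  have : ψ = ψ' := funext fun τ => funext fun z => h' τ z
  exact this ▸ h

lemma HeatTo.add {φ ψ φ' ψ' : ℂ → ℂ → ℂ} (h : HeatTo φ ψ) (h' : HeatTo φ' ψ') :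
    HeatTo (fun τ z => φ τ z + φ' τ z) (fun τ z => ψ τ z + ψ' τ z) := by
  intro τ hτ
  obtain ⟨a, b, h1, h2, h3⟩ := h τ hτ
  obtain ⟨c, d, h4, h5, h6⟩ := h' τ hτ
  refine ⟨fun z => a z + c z, fun z => b z + d z, fun z =>
    ((h1 z).add (h4 z)).congr_deriv (by ring), ?_, fun z => by simp only [h3, h6]; ring⟩
  have := h2.add h5
  simpa only [← mul_add] using this

lemma HeatTo.mul {φ ψ : ℂ → ℂ → ℂ} {c c' : ℂ → ℂ} (hc : HasD c c') (h : HeatTo φ ψ) :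
    HeatTo (fun τ z => c τ * φ τ z) (fun τ z => 12 * c' τ * φ τ z + c τ * ψ τ z) := by
  intro τ hτ
  obtain ⟨a, b, h1, h2, h3⟩ := h τ hτ
  refine ⟨fun z => c' τ * φ τ z + c τ * a z, fun z => c τ * b z, fun z =>
    ((hc τ hτ).mul (h1 z)).congr_deriv (by ring), ?_, fun z => by simp only [h3]; ring⟩
  have := h2.const_mul (c τ)
  simpa only [mul_left_comm] using this

lemma HeatTo.const_mul {φ ψ : ℂ → ℂ → ℂ} (c : ℂ) (h : HeatTo φ ψ) :
    HeatTo (fun τ z => c * φ τ z) (fun τ z => c * ψ τ z) :=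
  (HeatTo.mul (hasD_const c) h).congr fun τ z => by ring

lemma heatTo_thetaT_mul (a b : ℕ) : HeatTo (fun τ z => thetaT a τ z * thetaT b τ z)
    (fun τ z => 3 * (thetaT (a + 2) τ z * thetaT b τ z)
      - 6 * (thetaT (a + 1) τ z * thetaT (b + 1) τ z)
      + 3 * (thetaT a τ z * thetaT (b + 2) τ z)) := by
  intro τ hτ
  refine ⟨fun z => (thetaT (a + 2) τ z * thetaT b τ z + thetaT a τ z * thetaT (b + 2) τ z) / 2, _,
    fun z => ?_, hasD2_thetaT_mul a b hτ, fun z => by ring⟩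
  exact ((hasDerivAt_thetaT_tau a hτ z).mul (hasDerivAt_thetaT_tau b hτ z)).congr_deriv (by ring)

/-- The heat equation for `ϑ` makes the heat operator raise the Hirota order by two. -/
lemma heatTo_hirota {n : ℕ} (hn : n ≤ 3) :
    HeatTo (hirota n) (fun τ z => 3 * hirota (n + 1) τ z) := by
  have hh := heatTo_thetaT_mul
  interval_cases n
  · have e : hirota 0 = fun τ z => thetaT 0 τ z * thetaT 0 τ z := by
      ext τ z; exact hirota_zero τ z
    rw [e]
    exact (hh 0 0).congr fun τ z => by rw [hirota_one]; ring
  · have e := funext fun τ => funext fun z => hirota_one τ z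
    change hirota 1 = _ at e
    rw [e]
    exact (((hh 0 2).const_mul 2).add ((hh 1 1).const_mul (-2))).congr fun τ z => by
      rw [hirota_two]; ring
  · have e := funext fun τ => funext fun z => hirota_two τ z
    change hirota 2 = _ at e
    rw [e]
    exact ((((hh 0 4).const_mul 2).add ((hh 1 3).const_mul (-8))).add
      ((hh 2 2).const_mul 6)).congr fun τ z => by rw [hirota_three]; ring
  · have e := funext fun τ => funext fun z => hirota_three τ z
    change hirota 3 = _ at e
    rw [e]
    exact (((((hh 0 6).const_mul 2).add ((hh 1 5).const_mul (-12))).add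
      ((hh 2 4).const_mul 30)).add ((hh 3 3).const_mul (-20))).congr fun τ z => by
        rw [hirota_four]; ring

lemma heatMod_eq {φ₀ φ ψ : ℂ → ℂ → ℂ} (h : HeatTo φ ψ)
    (h₀ : ∀ τ : ℂ, 0 < τ.im → ∀ z, φ₀ τ z = φ τ z) (k : ℚ) {τ : ℂ} (hτ : 0 < τ.im) (z : ℂ) :
    heatMod 1 k φ₀ τ z = ψ τ z - (2 * (k : ℂ) - 1) / 2 * Eis2 τ * φ τ z := by
  obtain ⟨a, b, h1, h2, h3⟩ := h τ hτ
  have e1 : deriv (fun t => φ₀ t z) τ = 2 * π * I * a z :=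
    ((h1 z).congr_of_eventuallyEq (eventuallyEq_of_upper (fun t ht => h₀ t ht z) hτ)).deriv
  have e2 : φ₀ τ = φ τ := funext (h₀ τ hτ)
  have hpi : (π : ℂ) ≠ 0 := by exact_mod_cast Real.pi_ne_zero
  rw [heatMod, heatOp, e1, e2, h2.deriv2, h3]
  have e3 : 12 / (2 * π * I) * (2 * π * I * a z) = 12 * a z := by
    field_simp
  have e4 : 3 / (4 * π ^ 2 * ((1 : ℚ) : ℂ)) * ((2 * π * I) ^ 2 * b z) = -3 * b z := by
    rw [mul_pow, I_sq]
    push_cast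
    field_simp
    ring
  rw [e3, e4]
  ring

lemma hasD_etaD_inv : HasD (fun τ => (etaD τ ^ 6)⁻¹) (fun τ => -(Eis2 τ / 4) * (etaD τ ^ 6)⁻¹) := by
  intro τ hτ
  have h0 := etaD_ne_zero hτ
  refine (((hasD_etaD τ hτ).pow 6).inv (pow_ne_zero 6 h0)).congr_deriv ?_
  rw [Pi.pow_apply]
  push_cast
  field_simp
  ring

/-- The function `η⁻⁶ (c₀B₀ + c₁B₁ + c₂B₂ + c₃B₃ + c₄B₄)`, with `Bₙ` the Hirota derivative of
order `2n` and coefficients depending on `τ`. -/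
def comb (c₀ c₁ c₂ c₃ c₄ : ℂ → ℂ) (τ z : ℂ) : ℂ :=
  (etaD τ ^ 6)⁻¹ * (c₀ τ * hirota 0 τ z + c₁ τ * hirota 1 τ z + c₂ τ * hirota 2 τ z
    + c₃ τ * hirota 3 τ z + c₄ τ * hirota 4 τ z)

/-- The action of the modular heat operator of weight `k` on the coefficients: it replaces `cₙ` by
`12 Dcₙ - (k + 5/2) E₂ cₙ + 3 cₙ₋₁`. -/
lemma heatMod_comb {φ : ℂ → ℂ → ℂ} {c₀ c₁ c₂ c₃ d₀ d₁ d₂ d₃ : ℂ → ℂ}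
    (h₀ : HasD c₀ d₀) (h₁ : HasD c₁ d₁) (h₂ : HasD c₂ d₂) (h₃ : HasD c₃ d₃)
    (h : ∀ τ : ℂ, 0 < τ.im → ∀ z, φ τ z = comb c₀ c₁ c₂ c₃ (fun _ => 0) τ z) (k : ℚ)
    (τ : ℂ) (hτ : 0 < τ.im) (z : ℂ) :
    heatMod 1 k φ τ z = comb (fun τ => 12 * d₀ τ - (k + 5 / 2) * Eis2 τ * c₀ τ)
      (fun τ => 12 * d₁ τ - (k + 5 / 2) * Eis2 τ * c₁ τ + 3 * c₀ τ)
      (fun τ => 12 * d₂ τ - (k + 5 / 2) * Eis2 τ * c₂ τ + 3 * c₁ τ)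
      (fun τ => 12 * d₃ τ - (k + 5 / 2) * Eis2 τ * c₃ τ + 3 * c₂ τ)
      (fun τ => 3 * c₃ τ) τ z := by
  have key := HeatTo.mul hasD_etaD_inv ((((HeatTo.mul h₀ (heatTo_hirota (n := 0) (by norm_num))).add
    (HeatTo.mul h₁ (heatTo_hirota (n := 1) (by norm_num)))).add
    (HeatTo.mul h₂ (heatTo_hirota (n := 2) (by norm_num)))).add
    (HeatTo.mul h₃ (heatTo_hirota (n := 3) (by norm_num))))
  rw [heatMod_eq key (fun t ht w => by rw [h t ht, comb]; ring) k hτ z, comb]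
  ring

lemma phi01_eq {τ : ℂ} (hτ : 0 < τ.im) (z : ℂ) :
    phi01 τ z = comb (fun τ => 1 * Eis2 τ) (fun _ => -6) (fun _ => 0) (fun _ => 0)
      (fun _ => 0) τ z := by
  have e0 : thetaJ τ = thetaT 0 τ := funext (thetaJ_eq τ)
  have e1 : deriv (thetaT 0 τ) = fun z => 2 * π * I * thetaT 1 τ z :=
    funext fun z => (hasDerivAt_thetaT_z 0 hτ z).deriv
  have e2 : deriv (fun z => 2 * π * I * thetaT 1 τ z) z =
      2 * π * I * (2 * π * I * thetaT 2 τ z) :=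
    ((hasDerivAt_thetaT_z 1 hτ z).const_mul _).deriv
  have hpi : (π : ℂ) ≠ 0 := by exact_mod_cast Real.pi_ne_zero
  have h0 := etaD_ne_zero hτ
  rw [phi01, e0, e1, e2, comb, hirota_zero, hirota_one]
  have e3 : 3 / (π : ℂ) ^ 2 * (thetaT 0 τ z * (2 * π * I * (2 * π * I * thetaT 2 τ z))
      - (2 * π * I * thetaT 1 τ z) ^ 2) =
      -12 * (thetaT 0 τ z * thetaT 2 τ z - thetaT 1 τ z ^ 2) := by
    field_simp
    linear_combination 12 * (thetaT 0 τ z * thetaT 2 τ z - thetaT 1 τ z ^ 2) * I_sq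
  rw [e3]
  field_simp
  ring

/-- Translation by `τ` multiplies `ϑ(τ,z+w) ϑ(τ,z-w)` by a factor independent of `w`, and the Hirota
derivatives are the Taylor coefficients of that product in `w`. -/
lemma qp_hirota {n : ℕ} (hn : n ≤ 4) {τ : ℂ} (hτ : 0 < τ.im) : QP τ (hirota n τ) where
  diff := by
    unfold hirota
    refine Differentiable.fun_sum fun j _ => Differentiable.const_mul (fun z => ?_) _
    exact (hasDerivAt_thetaT_z _ hτ z).differentiableAt.mul
      (hasDerivAt_thetaT_z _ hτ z).differentiableAt
  add_one z := by
    unfold hirota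
    refine Finset.sum_congr rfl fun j _ => ?_
    rw [thetaT_add_one, thetaT_add_one]
    ring
  add_tau z := by
    have e : Complex.exp (-(2 * π * I * (τ + 2 * z))) =
        Complex.exp (-(π * I * τ) - 2 * π * I * z) ^ 2 := by
      rw [← Complex.exp_nat_mul]
      congr 1
      push_cast
      ring
    rw [e]
    interval_cases n <;>
    simp only [hirota_zero, hirota_one, hirota_two, hirota_three, hirota_four,
      thetaT_add_tau _ hτ, Finset.sum_range_succ, Finset.sum_range_zero] <;>
    norm_num [Nat.choose] <;>
    ring

lemma qp_comb (c₀ c₁ c₂ c₃ c₄ : ℂ → ℂ) {τ : ℂ} (hτ : 0 < τ.im) :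
    QP τ (comb c₀ c₁ c₂ c₃ c₄ τ) :=
  ((((((qp_hirota (n := 0) (by norm_num) hτ).const_mul _).add
    ((qp_hirota (n := 1) (by norm_num) hτ).const_mul _)).add
    ((qp_hirota (n := 2) (by norm_num) hτ).const_mul _)).add
    ((qp_hirota (n := 3) (by norm_num) hτ).const_mul _)).add
    ((qp_hirota (n := 4) (by norm_num) hτ).const_mul _)).const_mul _

end Heat

/-! ### The differential equation -/

section Final

lemma heat_phi01_zero (τ : ℂ) (hτ : 0 < τ.im) (z : ℂ) :
    heatMod 1 0 phi01 τ z = comb (fun τ => (-3 / 2) * Eis2 τ ^ 2 + (-1) * Eis4 τ)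
      (fun τ => 18 * Eis2 τ) (fun _ => -18) (fun _ => 0) (fun _ => 0) τ z := by
  rw [heatMod_comb (hasD_Eis2.const_mul 1) (hasD_const _) (hasD_const _) (hasD_const _)
    (fun t ht w => phi01_eq ht w) 0 τ hτ z, comb, comb]
  push_cast
  ring

lemma heat_phi01_two (τ : ℂ) (hτ : 0 < τ.im) (z : ℂ) :
    heatMod 1 2 (heatMod 1 0 phi01) τ z =
      comb (fun τ => 15 / 4 * Eis2 τ ^ 3 + 7 / 2 * (Eis2 τ * Eis4 τ) + 4 * Eis6 τ)
      (fun τ => (-135 / 2) * Eis2 τ ^ 2 + (-21) * Eis4 τ) (fun τ => 135 * Eis2 τ)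
      (fun _ => -54) (fun _ => 0) τ z := by
  rw [heatMod_comb (hasD_quadratic _ _) (hasD_Eis2.const_mul _) (hasD_const _) (hasD_const _)
    heat_phi01_zero 2 τ hτ z, comb, comb]
  push_cast
  ring

lemma heat_phi01_four (τ : ℂ) (hτ : 0 < τ.im) (z : ℂ) :
    heatMod 1 4 (heatMod 1 2 (heatMod 1 0 phi01)) τ z =
      comb (fun τ => -105 / 8 * Eis2 τ ^ 4 - 33 / 2 * (Eis2 τ ^ 2 * Eis4 τ)
        - 55 / 2 * Eis4 τ ^ 2 - 16 * (Eis2 τ * Eis6 τ))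
      (fun τ => 315 * Eis2 τ ^ 3 + 198 * (Eis2 τ * Eis4 τ) + 96 * Eis6 τ)
      (fun τ => -945 * Eis2 τ ^ 2 - 198 * Eis4 τ) (fun τ => 756 * Eis2 τ)
      (fun _ => -162) τ z := by
  rw [heatMod_comb (hasD_cubic _ _ _) (hasD_quadratic _ _) (hasD_Eis2.const_mul _) (hasD_const _)
    heat_phi01_two 4 τ hτ z, comb, comb]
  push_cast
  ring

/-- The left-hand side of the differential equation, written in Hirota derivatives. -/
def mdeLHS : ℂ → ℂ → ℂ :=
  comb (fun τ => -105 / 8 * Eis2 τ ^ 4 + 171 / 8 * (Eis2 τ ^ 2 * Eis4 τ)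
      - 9 / 4 * Eis4 τ ^ 2 - 6 * (Eis2 τ * Eis6 τ))
    (fun τ => 315 * Eis2 τ ^ 3 - 513 / 2 * (Eis2 τ * Eis4 τ) + 36 * Eis6 τ)
    (fun τ => -945 * Eis2 τ ^ 2 + 513 / 2 * Eis4 τ) (fun τ => 756 * Eis2 τ) (fun _ => -162)

lemma mdeLHS_eq (τ : ℂ) (hτ : 0 < τ.im) (z : ℂ) :
    heatMod 1 4 (heatMod 1 2 (heatMod 1 0 phi01)) τ z
      - (101/4) * Eis4 τ * heatMod 1 0 phi01 τ z
      + 10 * Eis6 τ * phi01 τ z = mdeLHS τ z := by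
  rw [heat_phi01_four τ hτ z, heat_phi01_zero τ hτ z, phi01_eq hτ z, mdeLHS]
  simp only [comb]
  ring

/-- The second `z`-derivatives at the origin of the Hirota derivatives of order up to eight; only
odd theta constants survive. -/
lemma hasD2_hirota {τ : ℂ} (hτ : 0 < τ.im) :
    ∃ g₀ g₁ g₂ g₃ g₄ : ℂ → ℂ, HasD2 (hirota 0 τ) g₀ ∧ HasD2 (hirota 1 τ) g₁ ∧
      HasD2 (hirota 2 τ) g₂ ∧ HasD2 (hirota 3 τ) g₃ ∧ HasD2 (hirota 4 τ) g₄ ∧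
      g₀ 0 = (2 * π * I) ^ 2 * (2 * thetaT 1 τ 0 ^ 2) ∧ g₁ 0 = 0 ∧
      g₂ 0 = (2 * π * I) ^ 2 * (-4 * (thetaT 1 τ 0 * thetaT 5 τ 0) + 4 * thetaT 3 τ 0 ^ 2) ∧
      g₃ 0 = (2 * π * I) ^ 2 *
        (-8 * (thetaT 1 τ 0 * thetaT 7 τ 0) + 8 * (thetaT 3 τ 0 * thetaT 5 τ 0)) ∧
      g₄ 0 = (2 * π * I) ^ 2 * (-12 * (thetaT 1 τ 0 * thetaT 9 τ 0)
        - 16 * (thetaT 3 τ 0 * thetaT 7 τ 0) + 28 * thetaT 5 τ 0 ^ 2) := by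
  have hh := fun a b => hasD2_thetaT_mul a b hτ
  have e0 := funext fun z => hirota_zero τ z
  have e1 := funext fun z => hirota_one τ z
  have e2 := funext fun z => hirota_two τ z
  have e3 := funext fun z => hirota_three τ z
  have e4 := funext fun z => hirota_four τ z
  change hirota 0 τ = _ at e0
  change hirota 1 τ = _ at e1
  change hirota 2 τ = _ at e2
  change hirota 3 τ = _ at e3
  change hirota 4 τ = _ at e4
  have z0 : thetaT 0 τ 0 = 0 := thetaT_even_zero (by decide) τ
  have z2 : thetaT 2 τ 0 = 0 := thetaT_even_zero (by decide) τ
  have z4 : thetaT 4 τ 0 = 0 := thetaT_even_zero (by decide) τ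
  have z6 : thetaT 6 τ 0 = 0 := thetaT_even_zero (by decide) τ
  have z8 : thetaT 8 τ 0 = 0 := thetaT_even_zero (by decide) τ
  rw [e0, e1, e2, e3, e4]
  refine ⟨_, _, _, _, _, hh 0 0, ((hh 0 2).const_mul 2).add ((hh 1 1).const_mul (-2)),
    (((hh 0 4).const_mul 2).add ((hh 1 3).const_mul (-8))).add ((hh 2 2).const_mul 6),
    ((((hh 0 6).const_mul 2).add ((hh 1 5).const_mul (-12))).add
      ((hh 2 4).const_mul 30)).add ((hh 3 3).const_mul (-20)),
    (((((hh 0 8).const_mul 2).add ((hh 1 7).const_mul (-16))).add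
      ((hh 2 6).const_mul 56)).add ((hh 3 5).const_mul (-112))).add ((hh 4 4).const_mul 70),
    ?_, ?_, ?_, ?_, ?_⟩ <;>
  simp only [Nat.reduceAdd, z0, z2, z4, z6, z8] <;> ring

lemma mdeLHS_at_zero {τ : ℂ} (hτ : 0 < τ.im) : mdeLHS τ 0 = 0 := by
  have z0 : thetaT 0 τ 0 = 0 := thetaT_even_zero (by decide) τ
  have z2 : thetaT 2 τ 0 = 0 := thetaT_even_zero (by decide) τ
  have z4 : thetaT 4 τ 0 = 0 := thetaT_even_zero (by decide) τ
  rw [mdeLHS, comb, hirota_zero, hirota_one, hirota_two, hirota_three, hirota_four, z0, z2, z4,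
    thetaNull_three τ hτ, thetaNull_five τ hτ, thetaNull_seven τ hτ]
  ring

lemma mdeLHS_deriv2 {τ : ℂ} (hτ : 0 < τ.im) : deriv (deriv (mdeLHS τ)) 0 = 0 := by
  obtain ⟨g₀, g₁, g₂, g₃, g₄, h0, h1, h2, h3, h4, v0, v1, v2, v3, v4⟩ := hasD2_hirota hτ
  have h := HasD2.const_mul ((etaD τ ^ 6)⁻¹) (((((h0.const_mul
    (-105 / 8 * Eis2 τ ^ 4 + 171 / 8 * (Eis2 τ ^ 2 * Eis4 τ)
      - 9 / 4 * Eis4 τ ^ 2 - 6 * (Eis2 τ * Eis6 τ))).add (h1.const_mul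
    (315 * Eis2 τ ^ 3 - 513 / 2 * (Eis2 τ * Eis4 τ) + 36 * Eis6 τ))).add (h2.const_mul
    (-945 * Eis2 τ ^ 2 + 513 / 2 * Eis4 τ))).add (h3.const_mul (756 * Eis2 τ))).add
    (h4.const_mul (-162)))
  refine (h.deriv2 0).trans ?_
  rw [v0, v1, v2, v3, v4, thetaNull_three τ hτ, thetaNull_five τ hτ, thetaNull_seven τ hτ,
    thetaNull_nine τ hτ]
  ring

end Final

/-- degree-3 modular differential equation for the elliptic genus of K3:
`H^{(1)}_{4}H^{(1)}_{2}H^{(1)}_{0}(φ_{0,1}) − (101/4)·E₄·H^{(1)}_{0}(φ_{0,1}) + 10·E₆·φ_{0,1} = 0`. -/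
theorem statement6 (τ z : ℂ) (hτ : 0 < τ.im) :
    heatMod 1 4 (heatMod 1 2 (heatMod 1 0 phi01)) τ z
      - (101/4) * Eis4 τ * heatMod 1 0 phi01 τ z
      + 10 * Eis6 τ * phi01 τ z = 0 := by
  rw [mdeLHS_eq τ hτ z]
  have hpi : (2 * π * I : ℂ) ≠ 0 := Complex.two_pi_I_ne_zero
  have ht := thetaNull_ne_zero hτ
  have z0 : thetaT 0 τ 0 = 0 := thetaT_even_zero (by decide) τ
  obtain ⟨g₀, -, -, -, -, h0, -, -, -, -, v0, -⟩ := hasD2_hirota hτ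
  refine QP.eq_zero (qp_hirota (n := 0) (by norm_num) hτ) (qp_hirota (n := 1) (by norm_num) hτ)
    (qp_comb _ _ _ _ _ hτ) ?_ ?_ ?_ (mdeLHS_at_zero hτ) (mdeLHS_deriv2 hτ) z
  · rw [hirota_zero, z0, mul_zero]
  · rw [h0.deriv2, v0]
    exact mul_ne_zero (pow_ne_zero 2 hpi) (mul_ne_zero two_ne_zero (pow_ne_zero 2 ht))
  · rw [hirota_one, z0, zero_mul, mul_zero, zero_add]
    exact mul_ne_zero (by norm_num) (mul_ne_zero ht ht)
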